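/- arXiv:2310.01822 — 3 statements merged into one kernel-verified Lean document; each statement's English description precedes it below -/
import Mathlib

section
/- There is a constant C ∈ ℕ such that ex(n,B) ≤ (9/8)·binom(n,2) + (21/16)·n + C for every n ≥ 5. -/
open Finset

/-- `E` is the edge set of a simplicial complex: it is closed under taking subsets. -/
def IsComplex {α : Type*} [DecidableEq α] (E : Finset (Finset α)) : Prop :=
  ∀ e ∈ E, ∀ f ⊆ e, f ∈ E

/-- `H` contains a copy of `F`: an injection of the vertices mapping edges to edges. -/
def HasCopy {α β : Type*} [DecidableEq β]
    (F : Finset (Finset α)) (H : Finset (Finset β)) : Prop :=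
  ∃ f : α → β, Function.Injective f ∧ ∀ e ∈ F, e.image f ∈ H

/-- downward closure of a family of sets -/
def dClosure {α : Type*} [DecidableEq α] (S : Finset (Finset α)) : Finset (Finset α) :=
  S.biUnion Finset.powerset

/-- `ex(n,F)`: the extremal number for simplicial complexes -/
noncomputable def exSC {α : Type*} (n : ℕ) (F : Finset (Finset α)) : ℕ :=
  sSup {m | ∃ E : Finset (Finset (Fin n)), IsComplex E ∧ ¬ HasCopy F E ∧ E.card = m}

/-- `ex^(k)(n,F)`: the extremal number for `k`-uniform hypergraphs -/
noncomputable def exUnif {α : Type*} (k n : ℕ) (F : Finset (Finset α)) : ℕ :=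
  sSup {m | ∃ E : Finset (Finset (Fin n)),
    (∀ e ∈ E, e.card = k) ∧ ¬ HasCopy F E ∧ E.card = m}

/-- the complex `B`: downward closure of `{{v3,v4},{v1,v2,v3},{v1,v4,v5}}`
(vertices `v1,…,v5` are `0,…,4`) -/
def B : Finset (Finset (Fin 5)) :=
  dClosure {{2, 3}, {0, 1, 2}, {0, 3, 4}}


section aux

variable {α : Type*} [DecidableEq α]

/-- `a,b,c` span a 3-edge -/
def Tr (E : Finset (Finset α)) (a b c : α) : Prop :=
  a ≠ b ∧ a ≠ c ∧ b ≠ c ∧ ({a, b, c} : Finset α) ∈ E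

/-- `a,b` span a 2-edge -/
def Ad (E : Finset (Finset α)) (a b : α) : Prop := a ≠ b ∧ ({a, b} : Finset α) ∈ E

/-- `B`-freeness spelled out -/
def BF (E : Finset (Finset α)) : Prop :=
  ∀ y u c v d, Tr E y u c → Tr E y v d → u ≠ v → u ≠ d → c ≠ v → c ≠ d → ¬ Ad E u v

/-- pages of the pair `y,u` are unique -/
def Uq (E : Finset (Finset α)) (y u : α) : Prop := ∀ c d, Tr E y u c → Tr E y u d → c = d

/-- no three 3-edges on four vertices -/
def NoK (E : Finset (Finset α)) : Prop :=
  ∀ a b c d, b ≠ c → b ≠ d → c ≠ d → Tr E a b c → Tr E a b d → Tr E a c d → False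

lemma Tr.s12 {E : Finset (Finset α)} {a b c : α} (h : Tr E a b c) : Tr E b a c := by
  obtain ⟨h1, h2, h3, h4⟩ := h
  refine ⟨h1.symm, h3, h2, ?_⟩
  rwa [Finset.insert_comm]

lemma Tr.s23 {E : Finset (Finset α)} {a b c : α} (h : Tr E a b c) : Tr E a c b := by
  obtain ⟨h1, h2, h3, h4⟩ := h
  refine ⟨h2, h1, h3.symm, ?_⟩
  rwa [Finset.pair_comm c b]

lemma Ad.symm {E : Finset (Finset α)} {a b : α} (h : Ad E a b) : Ad E b a :=
  ⟨h.1.symm, by rw [Finset.pair_comm]; exact h.2⟩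

lemma tr_of_mem {E : Finset (Finset α)} (hE : IsComplex E) {e : Finset α} (he : e ∈ E)
    {a b c : α} (ha : a ∈ e) (hb : b ∈ e) (hc : c ∈ e) (h1 : a ≠ b) (h2 : a ≠ c) (h3 : b ≠ c) :
    Tr E a b c := by
  refine ⟨h1, h2, h3, hE e he _ ?_⟩
  intro x hx
  simp only [Finset.mem_insert, Finset.mem_singleton] at hx
  rcases hx with rfl | rfl | rfl <;> assumption

lemma ad_of_mem {E : Finset (Finset α)} (hE : IsComplex E) {e : Finset α} (he : e ∈ E)
    {a b : α} (ha : a ∈ e) (hb : b ∈ e) (h1 : a ≠ b) : Ad E a b := by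
  refine ⟨h1, hE e he _ ?_⟩
  intro x hx
  simp only [Finset.mem_insert, Finset.mem_singleton] at hx
  rcases hx with rfl | rfl <;> assumption

lemma Tr.ad {E : Finset (Finset α)} (hE : IsComplex E) {a b c : α} (h : Tr E a b c) : Ad E a b :=
  ad_of_mem hE h.2.2.2 (by simp) (by simp) h.1

lemma Uq.symm {E : Finset (Finset α)} {a b : α} (h : Uq E a b) : Uq E b a :=
  fun c d hc hd => h c d hc.s12 hd.s12

/-- if the pair `ab` is in two triples then `ac`, `bc` are in one only -/
lemma one_of_two {E : Finset (Finset α)} (hE : IsComplex E) (hB : BF E) (hK : NoK E)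
    {a b c d : α} (h : Tr E a b c) (h' : Tr E a b d) (hcd : c ≠ d) : Uq E a c := by
  have key : ∀ e, Tr E a c e → e = b := by
    intro e he
    by_contra hne
    by_cases hed : e = d
    · subst hed
      exact hK a b c e h.2.2.1 h'.2.2.1 he.2.2.1 h h' he
    · exact hB a b d c e h' he h.2.2.1 (Ne.symm hne) hcd.symm (Ne.symm hed)
        (h.s12.s23.ad hE)
  intro x y hx hy
  rw [key x hx, key y hy]

lemma exists_page {E : Finset (Finset α)} (hE : IsComplex E) (hB : BF E) (hK : NoK E)
    {a b c : α} (h : Tr E a b c) :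
    ∃ x y z, Tr E x y z ∧ ({x, y, z} : Finset α) = {a, b, c} ∧ Uq E z x ∧ Uq E z y := by
  by_cases h1 : Uq E a b
  · by_cases h2 : Uq E a c
    · refine ⟨b, c, a, h.s12.s23, ?_, h1, h2⟩
      ext x; simp; tauto
    · refine ⟨a, c, b, h.s23, ?_, h1.symm, ?_⟩
      · ext x; simp; tauto
      · simp only [Uq, not_forall] at h2
        obtain ⟨x, y, hx, hy, hxy⟩ := h2
        by_cases hxb : x = b
        · subst hxb
          exact (one_of_two hE hB hK hx.s12 hy.s12 hxy).symm
        · exact (one_of_two hE hB hK h.s23.s12 hx.s12 (Ne.symm hxb)).symm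
  · simp only [Uq, not_forall] at h1
    obtain ⟨x, y, hx, hy, hxy⟩ := h1
    obtain ⟨d, hd, hcd⟩ : ∃ d, Tr E a b d ∧ c ≠ d := by
      by_cases hxc : c = x
      · exact ⟨y, hy, by rw [hxc]; exact hxy⟩
      · exact ⟨x, hx, hxc⟩
    exact ⟨a, b, c, h, rfl, (one_of_two hE hB hK h hd hcd).symm,
      (one_of_two hE hB hK h.s12 hd.s12 hcd).symm⟩

/-- `G[W]` has maximum degree at most one -/
def Valid (E : Finset (Finset α)) (W : Finset α) : Prop :=
  ∀ u ∈ W, ∀ a ∈ W, ∀ b ∈ W, Ad E u a → Ad E u b → a = b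

open Classical in
/-- the set `S_y` -/
noncomputable def SS (E : Finset (Finset α)) (V W : Finset α) (y : α) : Finset α :=
  V.filter fun u => ∃ c, Tr E y u c ∧ (u ∈ W ∨ (Uq E y u ∧ Uq E y c))

lemma SS_valid {E : Finset (Finset α)} (hB : BF E) (V W : Finset α) (hW : Valid E W) (y : α) :
    Valid E (SS E V W y) := by
  have key : ∀ u c v, Tr E y u c → Uq E y u → Uq E y c → (∃ d, Tr E y v d) → Ad E u v →
      v = c := by
    rintro u c v h1 h2 h3 ⟨d, hd⟩ ha
    by_contra hne
    by_cases hud : u = d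
    · subst hud
      exact hne (h2 _ _ hd.s23 h1)
    · by_cases hcd : c = d
      · subst hcd
        exact ha.1 (h3 _ _ h1.s23 hd.s23)
      · exact hB y u c v d h1 hd ha.1 hud (Ne.symm hne) hcd ha
  intro u hu a ha b hb hua hub
  simp only [SS, Finset.mem_filter] at hu ha hb
  obtain ⟨-, cu, hcu, hu⟩ := hu
  obtain ⟨-, ca, hca, ha⟩ := ha
  obtain ⟨-, cb, hcb, hb⟩ := hb
  by_cases hI : ∃ c, Tr E y u c ∧ Uq E y u ∧ Uq E y c
  · obtain ⟨c, h1, h2, h3⟩ := hI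
    rw [key u c a h1 h2 h3 ⟨_, hca⟩ hua, key u c b h1 h2 h3 ⟨_, hcb⟩ hub]
  · have hx : ∀ v c, Tr E y v c → Ad E u v → Uq E y v → Uq E y c → False := by
      intro v c h1 h2 h3 h4
      have := key v c u h1 h3 h4 ⟨_, hcu⟩ h2.symm
      subst this
      exact hI ⟨v, h1.s23, h4, h3⟩
    have hu' : u ∈ W := by
      rcases hu with hu | hu
      · exact hu
      · exact absurd ⟨cu, hcu, hu⟩ hI
    have ha' : a ∈ W := by
      rcases ha with ha | ha
      · exact ha
      · exact (hx a ca hca hua ha.1 ha.2).elim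
    have hb' : b ∈ W := by
      rcases hb with hb | hb
      · exact hb
      · exact (hx b cb hcb hub hb.1 hb.2).elim
    exact hW u hu' a ha' b hb' hua hub

/-- the bound on the number of triples -/
lemma triples_bound {E : Finset (Finset α)} (hE : IsComplex E) (hB : BF E) (hK : NoK E)
    (V W : Finset α) (hV : ∀ e ∈ E, e ⊆ V) (hWV : W ⊆ V) (hW : Valid E W)
    (hmax : ∀ S ⊆ V, Valid E S → S.card ≤ W.card) :
    (E.filter fun e => e.card = 3).card * 2 ≤ (V.card - W.card) * W.card := by
  classical
  set P := (V \ W).sigma (fun y => SS E V W y) with hP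
  let r : Finset α → (Σ _ : α, α) → Prop := fun t q =>
    q.1 ∈ t ∧ q.2 ∈ t ∧ q.1 ≠ q.2 ∧ (Uq E q.1 q.2 ∨ (q.2 ∈ W ∧ ∀ c ∈ t, c ≠ q.1 → c ∈ W))
  have h1 := Finset.card_mul_le_card_mul (s := E.filter fun e => e.card = 3) (t := P) (m := 2)
    (n := 1) r ?_ ?_
  · have h2 : P.card ≤ (V \ W).card * W.card := by
      rw [hP, Finset.card_sigma]
      refine (Finset.sum_le_card_nsmul _ _ W.card ?_).trans (by simp)
      intro y _
      exact hmax _ (Finset.filter_subset _ _) (SS_valid hB V W hW y)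
    rw [Finset.card_sdiff_of_subset hWV] at h2
    omega
  · intro t ht
    simp only [Finset.mem_filter] at ht
    obtain ⟨hte, ht3⟩ := ht
    obtain ⟨a, b, c, hab, hac, hbc, rfl⟩ := Finset.card_eq_three.1 ht3
    obtain ⟨x, y, z, hT, heq, o1, o2⟩ := exists_page hE hB hK (⟨hab, hac, hbc, hte⟩ : Tr E a b c)
    rw [← heq] at hte ⊢
    have hx : x ∈ V := hV _ hte (by simp)
    have hy : y ∈ V := hV _ hte (by simp)
    have hz : z ∈ V := hV _ hte (by simp)
    obtain ⟨n1, n2, n3, -⟩ := id hT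
    suffices H : ∃ p ∈ P, ∃ q ∈ P, p ≠ q ∧ r {x, y, z} p ∧ r {x, y, z} q by
      obtain ⟨p, hp, q, hq, hpq, hrp, hrq⟩ := H
      have : ({p, q} : Finset _) ⊆ Finset.bipartiteAbove r P {x, y, z} := by
        intro w hw
        simp only [Finset.mem_insert, Finset.mem_singleton] at hw
        rw [Finset.mem_bipartiteAbove]
        rcases hw with rfl | rfl <;> constructor <;> assumption
      have h := Finset.card_le_card this
      rwa [Finset.card_pair hpq] at h
    have memP : ∀ u v c, u ∈ V → u ∉ W → v ∈ V → Tr E u v c →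
        (v ∈ W ∨ (Uq E u v ∧ Uq E u c)) → (⟨u, v⟩ : Σ _ : α, α) ∈ P := by
      intro u v c hu hu' hv h h'
      simp only [hP, Finset.mem_sigma, Finset.mem_sdiff, SS, Finset.mem_filter]
      exact ⟨⟨hu, hu'⟩, hv, c, h, h'⟩
    by_cases hzW : z ∈ W
    · by_cases hxW : x ∈ W
      · have hyW : y ∉ W := fun hyW => n3 (hW x hxW y hyW z hzW (hT.ad hE) (hT.s23.ad hE))
        refine ⟨⟨y, z⟩, memP y z x hy hyW hz hT.s12.s23 (Or.inl hzW),
          ⟨y, x⟩, memP y x z hy hyW hx hT.s12 (Or.inl hxW), ?_, ?_, ?_⟩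
        · simp [Ne.symm n2]
        · exact ⟨by simp, by simp, n3, Or.inl o2.symm⟩
        · refine ⟨by simp, by simp, n1.symm, Or.inr ⟨hxW, ?_⟩⟩
          intro c hc hcy
          simp only [Finset.mem_insert, Finset.mem_singleton] at hc
          rcases hc with rfl | rfl | rfl
          · exact hxW
          · exact absurd rfl hcy
          · exact hzW
      · by_cases hyW : y ∈ W
        · refine ⟨⟨x, z⟩, memP x z y hx hxW hz hT.s23 (Or.inl hzW),
            ⟨x, y⟩, memP x y z hx hxW hy hT (Or.inl hyW), ?_, ?_, ?_⟩
          · simp [Ne.symm n3]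
          · exact ⟨by simp, by simp, n2, Or.inl o1.symm⟩
          · refine ⟨by simp, by simp, n1, Or.inr ⟨hyW, ?_⟩⟩
            intro c hc hcy
            simp only [Finset.mem_insert, Finset.mem_singleton] at hc
            rcases hc with rfl | rfl | rfl
            · exact absurd rfl hcy
            · exact hyW
            · exact hzW
        · refine ⟨⟨x, z⟩, memP x z y hx hxW hz hT.s23 (Or.inl hzW),
            ⟨y, z⟩, memP y z x hy hyW hz hT.s12.s23 (Or.inl hzW), ?_, ?_, ?_⟩
          · simp [n1]
          · exact ⟨by simp, by simp, n2, Or.inl o1.symm⟩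
          · exact ⟨by simp, by simp, n3, Or.inl o2.symm⟩
    · refine ⟨⟨z, x⟩, memP z x y hz hzW hx hT.s23.s12 (Or.inr ⟨o1, o2⟩),
        ⟨z, y⟩, memP z y x hz hzW hy hT.s23.s12.s23 (Or.inr ⟨o2, o1⟩), ?_, ?_, ?_⟩
      · simp [n1]
      · exact ⟨by simp, by simp, n2.symm, Or.inl o1⟩
      · exact ⟨by simp, by simp, n3.symm, Or.inl o2⟩
  · rintro ⟨y, u⟩ hq
    rw [Finset.card_le_one]
    have third : ∀ t ∈ Finset.bipartiteBelow r (E.filter fun e => e.card = 3) ⟨y, u⟩,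
        ∃ c, t = {y, u, c} ∧ Tr E y u c ∧ (Uq E y u ∨ (u ∈ W ∧ c ∈ W)) := by
      intro t ht
      rw [Finset.mem_bipartiteBelow, Finset.mem_filter] at ht
      obtain ⟨⟨hte, ht3⟩, hy, hu, hyu, h⟩ := ht
      simp only at hy hu hyu h
      have hsub : ({y, u} : Finset α) ⊆ t := by
        intro x hx
        simp only [Finset.mem_insert, Finset.mem_singleton] at hx
        rcases hx with rfl | rfl <;> assumption
      have hc1 : (t \ {y, u}).card = 1 := by
        rw [Finset.card_sdiff_of_subset hsub, ht3, Finset.card_pair hyu]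
      obtain ⟨c, hc⟩ := Finset.card_eq_one.1 hc1
      have hct : c ∈ t \ {y, u} := by rw [hc]; simp
      simp only [Finset.mem_sdiff, Finset.mem_insert, Finset.mem_singleton, not_or] at hct
      have hteq : t = {y, u, c} := by
        rw [← Finset.sdiff_union_of_subset hsub, hc]
        ext x; simp; tauto
      refine ⟨c, hteq, ⟨hyu, Ne.symm hct.2.1, Ne.symm hct.2.2, hteq ▸ hte⟩, ?_⟩
      rcases h with h | h
      · exact Or.inl h
      · exact Or.inr ⟨h.1, h.2 c hct.1 hct.2.1⟩
    intro t ht t' ht'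
    obtain ⟨c, rfl, hc, h⟩ := third t ht
    obtain ⟨c', rfl, hc', h'⟩ := third t' ht'
    have : c = c' := by
      rcases h with h | h
      · exact h _ _ hc hc'
      · rcases h' with h' | h'
        · exact h' _ _ hc hc'
        · exact hW u h.1 c h.2 c' h'.2 (hc.s12.s23.ad hE)
            (hc'.s12.s23.ad hE)
    rw [this]

lemma matching_bound {E : Finset (Finset α)}
    (W : Finset α) (hW : Valid E W) :
    ((E.filter fun e => e.card = 2).filter fun e => e ⊆ W).card * 2 ≤ W.card * 1 := by
  classical
  refine Finset.card_mul_le_card_mul (fun (e : Finset α) (w : α) => w ∈ e) ?_ ?_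
  · intro e he
    simp only [Finset.mem_filter] at he
    obtain ⟨⟨he, h2⟩, hs⟩ := he
    rw [← h2]
    apply Finset.card_le_card
    intro x hx
    rw [Finset.mem_bipartiteAbove]
    exact ⟨hs hx, hx⟩
  · intro w hw
    rw [Finset.card_le_one]
    have key : ∀ e ∈ Finset.bipartiteBelow (fun (e : Finset α) (w : α) => w ∈ e)
        ((E.filter fun e => e.card = 2).filter fun e => e ⊆ W) w,
        ∃ x ∈ W, Ad E w x ∧ e = {w, x} := by
      intro e he
      rw [Finset.mem_bipartiteBelow, Finset.mem_filter, Finset.mem_filter] at he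
      obtain ⟨⟨⟨he, h2⟩, hs⟩, hwe⟩ := he
      obtain ⟨x, y, hxy, rfl⟩ := Finset.card_eq_two.1 h2
      simp only [Finset.mem_insert, Finset.mem_singleton] at hwe
      rcases hwe with rfl | rfl
      · exact ⟨y, hs (by simp), ⟨hxy, he⟩, rfl⟩
      · exact ⟨x, hs (by simp), ⟨hxy.symm, by rw [Finset.pair_comm]; exact he⟩,
          Finset.pair_comm _ _⟩
    intro e he e' he'
    obtain ⟨x, hx, ha, rfl⟩ := key e he
    obtain ⟨x', hx', ha', rfl⟩ := key e' he'
    rw [hW w hw x hx x' hx' ha ha']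

lemma direct_bound {E : Finset (Finset α)} (hE : IsComplex E) (hB : BF E) (hK : NoK E)
    (V : Finset α) (hV : ∀ e ∈ E, e ⊆ V) :
    (E.card : ℝ) ≤ 9 / 16 * (V.card : ℝ) ^ 2 + 3 / 4 * (V.card : ℝ) + 5 / 4 := by
  classical
  obtain ⟨W, hWm, hmax⟩ := Finset.exists_max_image (V.powerset.filter fun S => Valid E S)
    Finset.card ⟨∅, Finset.mem_filter.2 ⟨by simp, fun u hu => absurd hu (Finset.notMem_empty u)⟩⟩
  simp only [Finset.mem_filter, Finset.mem_powerset] at hWm hmax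
  obtain ⟨hWV, hW⟩ := hWm
  have hT := triples_bound hE hB hK V W hV hWV hW (fun S h1 h2 => hmax S ⟨h1, h2⟩)
  have hM := matching_bound W hW
  set E2 := E.filter fun e => e.card = 2 with hE2
  set E3 := E.filter fun e => e.card = 3 with hE3
  have hcov : E ⊆ (({∅} ∪ V.image (fun v => {v})) ∪ E2) ∪ E3 := by
    intro e he
    have h4 : e.card < 4 := by
      by_contra h4
      obtain ⟨f, hf, hf4⟩ := Finset.exists_subset_card_eq (not_lt.1 h4)
      obtain ⟨a, b, c, d, h1, h2, h3, h5, h6, h7, rfl⟩ := Finset.card_eq_four.1 hf4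
      have hfe := hE e he _ hf
      refine hK a b c d h5 h6 h7 ?_ ?_ ?_ <;>
        exact tr_of_mem hE hfe (by simp) (by simp) (by simp) (by assumption) (by assumption)
          (by assumption)
    simp only [Finset.mem_union, hE2, hE3, Finset.mem_filter, Finset.mem_image,
      Finset.mem_singleton]
    have : e.card = 0 ∨ e.card = 1 ∨ e.card = 2 ∨ e.card = 3 := by omega
    rcases this with h | h | h | h
    · exact Or.inl (Or.inl (Or.inl (Finset.card_eq_zero.1 h)))
    · obtain ⟨v, rfl⟩ := Finset.card_eq_one.1 h
      exact Or.inl (Or.inl (Or.inr ⟨v, hV _ he (by simp), rfl⟩))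
    · exact Or.inl (Or.inr ⟨he, h⟩)
    · exact Or.inr ⟨he, h⟩
  have hc1 : E.card ≤ 1 + V.card + E2.card + E3.card := by
    refine (Finset.card_le_card hcov).trans ?_
    refine (Finset.card_union_le _ _).trans ?_
    gcongr
    refine (Finset.card_union_le _ _).trans ?_
    gcongr
    refine (Finset.card_union_le _ _).trans ?_
    gcongr
    · simp
    · exact Finset.card_image_le
  have hc2 : E2.card ≤ (V.card.choose 2 - W.card.choose 2) + (E2.filter fun e => e ⊆ W).card := by
    have hsub : E2 ⊆ (Finset.powersetCard 2 V \ Finset.powersetCard 2 W) ∪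
        (E2.filter fun e => e ⊆ W) := by
      intro e he
      have he' := he
      rw [hE2, Finset.mem_filter] at he'
      by_cases h : e ⊆ W
      · exact Finset.mem_union_right _ (Finset.mem_filter.2 ⟨he, h⟩)
      · refine Finset.mem_union_left _ ?_
        rw [Finset.mem_sdiff, Finset.mem_powersetCard, Finset.mem_powersetCard]
        exact ⟨⟨hV e he'.1, he'.2⟩, fun hh => h hh.1⟩
    refine (Finset.card_le_card hsub).trans ((Finset.card_union_le _ _).trans ?_)
    rw [Finset.card_sdiff_of_subset (Finset.powersetCard_mono hWV), Finset.card_powersetCard,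
      Finset.card_powersetCard]
  have hle : W.card ≤ V.card := Finset.card_le_card hWV
  have hch : W.card.choose 2 ≤ V.card.choose 2 := Nat.choose_le_choose 2 hle
  have r1 : (E.card : ℝ) ≤ 1 + V.card + E2.card + E3.card := by exact_mod_cast hc1
  have r2 : (E2.card : ℝ) ≤ ((V.card.choose 2 : ℝ) - (W.card.choose 2 : ℝ))
      + ((E2.filter fun e => e ⊆ W).card : ℝ) := by
    rw [← Nat.cast_sub hch]; exact_mod_cast hc2
  have r3 : ((E2.filter fun e => e ⊆ W).card : ℝ) * 2 ≤ W.card * 1 := by exact_mod_cast hM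
  have r4 : (E3.card : ℝ) * 2 ≤ ((V.card : ℝ) - W.card) * W.card := by
    rw [← Nat.cast_sub hle]; exact_mod_cast hT
  rw [Nat.cast_choose_two, Nat.cast_choose_two] at r2
  nlinarith [sq_nonneg ((V.card : ℝ) + 2 - 4 * W.card)]

/-- the set of third vertices -/
def Pg (E : Finset (Finset α)) (V : Finset α) (k u : α) : Finset α :=
  V.filter fun v => k ≠ u ∧ k ≠ v ∧ u ≠ v ∧ ({k, u, v} : Finset α) ∈ E

lemma mem_Pg {E : Finset (Finset α)} {V : Finset α} (hV : ∀ e ∈ E, e ⊆ V) {k u v : α} :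
    v ∈ Pg E V k u ↔ Tr E k u v := by
  simp only [Pg, Finset.mem_filter, Tr]
  exact ⟨fun h => h.2, fun h => ⟨hV _ h.2.2.2 (by simp), h⟩⟩

lemma K_facts {E : Finset (Finset α)} (hE : IsComplex E) (hB : BF E)
    {a b c d : α} (hbc : b ≠ c) (hbd : b ≠ d) (hcd : c ≠ d) (h1 : Tr E a b c) (h2 : Tr E a b d)
    (h3 : Tr E a c d) {k k' u v : α} (hk : k ∈ ({a, b, c, d} : Finset α))
    (hk' : k' ∈ ({a, b, c, d} : Finset α)) (hkk : k ≠ k')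
    (hu : u ∉ ({a, b, c, d} : Finset α)) (h : Tr E k u v) : ¬ Ad E k' u := by
  have A1 := h1.ad hE
  have A2 := h2.s23.ad hE
  have A3 := h3.ad hE
  have A4 := h1.s12.s23.ad hE
  have A5 := h2.s12.s23.ad hE
  have A6 := h3.s12.s23.ad hE
  have hab := A1.1
  have hac := A3.1
  have had := A2.1
  simp only [Finset.mem_insert, Finset.mem_singleton, not_or] at hu
  obtain ⟨ua, ub, uc, ud⟩ := hu
  -- no triple meets `K` in exactly two vertices
  have n1 : ¬ Tr E a b u := fun t => hB a b u c d t h3 hbc hbd uc ud A4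
  have n2 : ¬ Tr E a c u := fun t => hB a c u b d t h2 hbc.symm hcd ub ud A4.symm
  have n3 : ¬ Tr E a d u := fun t => hB a d u b c t h1 hbd.symm hcd.symm ub uc A5.symm
  have n4 : ¬ Tr E b c u := fun t =>
    hB b c u a d t h2.s12 hac.symm hcd ua ud A3.symm
  have n5 : ¬ Tr E b d u := fun t =>
    hB b d u a c t h1.s12 had.symm hcd.symm ua uc A2.symm
  have n6 : ¬ Tr E c d u := fun t =>
    hB c d u a b t h1.s23.s12 had.symm hbd.symm ua ub A2.symm
  have vK : v ≠ a ∧ v ≠ b ∧ v ≠ c ∧ v ≠ d := by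
    simp only [Finset.mem_insert, Finset.mem_singleton] at hk
    have hkv := h.2.1
    refine ⟨?_, ?_, ?_, ?_⟩ <;> rintro rfl <;> rcases hk with rfl | rfl | rfl | rfl <;>
      first
      | exact hkv rfl
      | exact n1 h.s23 | exact n1 h.s23.s12
      | exact n2 h.s23 | exact n2 h.s23.s12
      | exact n3 h.s23 | exact n3 h.s23.s12
      | exact n4 h.s23 | exact n4 h.s23.s12
      | exact n5 h.s23 | exact n5 h.s23.s12
      | exact n6 h.s23 | exact n6 h.s23.s12
  obtain ⟨va, vb, vc, vd⟩ := vK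
  -- a triple inside K through both vertices
  obtain ⟨p, hp, hT⟩ : ∃ p ∈ ({a, b, c, d} : Finset α), Tr E k k' p := by
    simp only [Finset.mem_insert, Finset.mem_singleton] at hk hk'
    rcases hk with rfl | rfl | rfl | rfl <;> rcases hk' with rfl | rfl | rfl | rfl <;>
      first
      | exact absurd rfl hkk
      | exact ⟨_, by simp, h1⟩ | exact ⟨_, by simp, h1.s12⟩ | exact ⟨_, by simp, h1.s23⟩
      | exact ⟨_, by simp, h1.s12.s23⟩ | exact ⟨_, by simp, h1.s23.s12⟩
      | exact ⟨_, by simp, h1.s23.s12.s23⟩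
      | exact ⟨_, by simp, h2⟩ | exact ⟨_, by simp, h2.s12⟩ | exact ⟨_, by simp, h2.s23⟩
      | exact ⟨_, by simp, h2.s12.s23⟩ | exact ⟨_, by simp, h2.s23.s12⟩
      | exact ⟨_, by simp, h2.s23.s12.s23⟩
      | exact ⟨_, by simp, h3⟩ | exact ⟨_, by simp, h3.s12⟩ | exact ⟨_, by simp, h3.s23⟩
      | exact ⟨_, by simp, h3.s12.s23⟩ | exact ⟨_, by simp, h3.s23.s12⟩
      | exact ⟨_, by simp, h3.s23.s12.s23⟩
  have nu : ∀ x ∈ ({a, b, c, d} : Finset α), x ≠ u ∧ x ≠ v := by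
    intro x hx
    simp only [Finset.mem_insert, Finset.mem_singleton] at hx
    rcases hx with rfl | rfl | rfl | rfl
    · exact ⟨Ne.symm ua, Ne.symm va⟩
    · exact ⟨Ne.symm ub, Ne.symm vb⟩
    · exact ⟨Ne.symm uc, Ne.symm vc⟩
    · exact ⟨Ne.symm ud, Ne.symm vd⟩
  exact hB k k' p u v hT h (nu k' hk').1 (nu k' hk').2 (nu p hp).1 (nu p hp).2

lemma deletion_bound {E : Finset (Finset α)} (hE : IsComplex E) (hB : BF E)
    (V : Finset α) (hV : ∀ e ∈ E, e ⊆ V)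
    {K : Finset α} (hKV : K ⊆ V) (hK4 : K.card = 4)
    (hK : ∀ k ∈ K, ∀ k' ∈ K, k ≠ k' → ∀ u ∉ K, ∀ v, Tr E k u v → ¬ Ad E k' u) :
    (E.filter fun e => ¬ Disjoint K e).card ≤ 4 * V.card := by
  classical
  let Ch : α → Finset (Finset α) := fun u => E.filter fun e =>
    u ∈ e ∧ ∃ k ∈ K, k ∈ e ∧ (e = {k, u} ∨ (Pg E V k u).card ≤ 2)
  have hcov : (E.filter fun e => ¬ Disjoint K e) ⊆ K.powerset ∪ (V \ K).biUnion Ch := by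
    intro e he
    rw [Finset.mem_filter] at he
    obtain ⟨he, hd⟩ := he
    by_cases hs : e ⊆ K
    · exact Finset.mem_union_left _ (Finset.mem_powerset.2 hs)
    refine Finset.mem_union_right _ ?_
    obtain ⟨k, hkK, hke⟩ := Finset.not_disjoint_iff.1 hd
    obtain ⟨u, hue, huK⟩ := Finset.not_subset.1 hs
    have hku : k ≠ u := fun h => huK (h ▸ hkK)
    rw [Finset.mem_biUnion]
    by_cases h2 : e = {k, u}
    · refine ⟨u, Finset.mem_sdiff.2 ⟨hV e he hue, huK⟩, Finset.mem_filter.2 ⟨he, hue, k, hkK, hke,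
        Or.inl h2⟩⟩
    · obtain ⟨v, hve, hvk, hvu⟩ : ∃ v ∈ e, v ≠ k ∧ v ≠ u := by
        by_contra hcon
        push Not at hcon
        apply h2
        ext x
        simp only [Finset.mem_insert, Finset.mem_singleton]
        constructor
        · intro hx
          by_cases hxk : x = k
          · exact Or.inl hxk
          · exact Or.inr (hcon x hx hxk)
        · rintro (rfl | rfl) <;> assumption
      have htr : Tr E k u v := tr_of_mem hE he hke hue hve hku hvk.symm hvu.symm
      have hvK : v ∉ K := fun hvK =>
        hK k hkK v hvK hvk.symm u huK v htr (htr.s23.s12.s23.ad hE)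
      by_cases hu2 : (Pg E V k u).card ≤ 2
      · exact ⟨u, Finset.mem_sdiff.2 ⟨hV e he hue, huK⟩, Finset.mem_filter.2 ⟨he, hue, k, hkK, hke,
          Or.inr hu2⟩⟩
      · by_cases hv2 : (Pg E V k v).card ≤ 2
        · exact ⟨v, Finset.mem_sdiff.2 ⟨hV e he hve, hvK⟩, Finset.mem_filter.2 ⟨he, hve, k, hkK,
            hke, Or.inr hv2⟩⟩
        · exfalso
          obtain ⟨w, hw, hwv⟩ : ∃ w ∈ Pg E V k u, w ∉ ({v} : Finset α) :=
            Finset.exists_mem_notMem_of_card_lt_card (by rw [Finset.card_singleton]; omega)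
          obtain ⟨z, hz, hzn⟩ : ∃ z ∈ Pg E V k v, z ∉ ({u, w} : Finset α) :=
            Finset.exists_mem_notMem_of_card_lt_card
              (lt_of_le_of_lt Finset.card_le_two (not_le.1 hv2))
          simp only [Finset.mem_insert, Finset.mem_singleton, not_or] at hwv hzn
          exact hB k u w v z ((mem_Pg hV).1 hw) ((mem_Pg hV).1 hz) (Ne.symm hvu)
            (Ne.symm hzn.1) hwv (Ne.symm hzn.2) (htr.s12.s23.ad hE)
  have hCh : ∀ u ∈ V \ K, (Ch u).card ≤ 4 := by
    intro u hu
    obtain ⟨-, huK⟩ := Finset.mem_sdiff.1 hu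
    by_cases hex : ∃ k ∈ K, ∃ v, Tr E k u v
    · obtain ⟨k, hkK, v, hkv⟩ := hex
      have huniq : ∀ e ∈ Ch u, k ∈ e ∧ u ∈ e ∧ e ∈ E ∧
          (e = {k, u} ∨ (Pg E V k u).card ≤ 2) := by
        intro e he
        obtain ⟨he, hue, k', hk', hke, h⟩ := Finset.mem_filter.1 he
        have hkk : k = k' := by
          by_contra hne
          exact hK k hkK k' hk' hne u huK v hkv
            (ad_of_mem hE he hke hue (fun h => huK (h ▸ hk')))
        subst hkk
        exact ⟨hke, hue, he, h⟩
      by_cases h2 : (Pg E V k u).card ≤ 2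
      · have hsub : Ch u ⊆ (Pg E V k u).powerset.image (fun S => {k, u} ∪ S) := by
          intro e he
          obtain ⟨hke, hue, he, -⟩ := huniq e he
          rw [Finset.mem_image]
          refine ⟨e \ {k, u}, ?_, ?_⟩
          · rw [Finset.mem_powerset]
            intro x hx
            simp only [Finset.mem_sdiff, Finset.mem_insert, Finset.mem_singleton, not_or] at hx
            exact (mem_Pg hV).2 (tr_of_mem hE he hke hue hx.1 hkv.1 (Ne.symm hx.2.1)
              (Ne.symm hx.2.2))
          · apply Finset.union_sdiff_of_subset
            intro x hx
            simp only [Finset.mem_insert, Finset.mem_singleton] at hx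
            rcases hx with rfl | rfl <;> assumption
        refine (Finset.card_le_card hsub).trans (Finset.card_image_le.trans ?_)
        rw [Finset.card_powerset]
        exact (Nat.pow_le_pow_right (by norm_num) h2).trans (by norm_num)
      · have hsub : Ch u ⊆ {{k, u}} := by
          intro e he
          obtain ⟨hke, hue, he, h | h⟩ := huniq e he
          · rw [Finset.mem_singleton]; exact h
          · exact absurd h h2
        exact (Finset.card_le_card hsub).trans (by simp)
    · have hsub : Ch u ⊆ K.image (fun k => {k, u}) := by
        intro e he
        obtain ⟨he, hue, k, hk, hke, -⟩ := Finset.mem_filter.1 he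
        rw [Finset.mem_image]
        refine ⟨k, hk, ?_⟩
        ext x
        simp only [Finset.mem_insert, Finset.mem_singleton]
        constructor
        · rintro (rfl | rfl) <;> assumption
        · intro hx
          by_contra hcon
          rw [not_or] at hcon
          exact hex ⟨k, hk, x, tr_of_mem hE he hke hue hx (fun h => huK (h ▸ hk))
            (Ne.symm hcon.1) (Ne.symm hcon.2)⟩
      exact (Finset.card_le_card hsub).trans (Finset.card_image_le.trans hK4.le)
  have hle := (Finset.card_le_card hcov).trans (Finset.card_union_le _ _)
  have hle2 : ((V \ K).biUnion Ch).card ≤ (V \ K).card * 4 :=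
    Finset.card_biUnion_le_card_mul _ _ _ hCh
  rw [Finset.card_powerset, hK4] at hle
  rw [Finset.card_sdiff_of_subset hKV, hK4] at hle2
  have := Finset.card_le_card hKV
  omega

theorem main_bound (N : ℕ) : ∀ (V : Finset α) (E : Finset (Finset α)), V.card = N →
    IsComplex E → BF E → (∀ e ∈ E, e ⊆ V) →
    (E.card : ℝ) ≤ 9 / 16 * (N : ℝ) ^ 2 + 3 / 4 * (N : ℝ) + 4096 := by
  classical
  induction N using Nat.strong_induction_on with
  | _ N ih =>
    intro V E hN hE hB hV
    by_cases hK : NoK E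
    · have := direct_bound hE hB hK V hV
      rw [hN] at this
      linarith
    by_cases hN12 : N < 12
    · have h1 : E.card ≤ 2 ^ N := by
        rw [← hN, ← Finset.card_powerset]
        exact Finset.card_le_card fun e he => Finset.mem_powerset.2 (hV e he)
      have h2 : E.card ≤ 4096 :=
        h1.trans ((Nat.pow_le_pow_right (by norm_num) hN12.le).trans (by norm_num))
      have h3 : (E.card : ℝ) ≤ 4096 := by exact_mod_cast h2
      have : (0 : ℝ) ≤ 9 / 16 * (N : ℝ) ^ 2 + 3 / 4 * (N : ℝ) := by positivity
      linarith
    · simp only [NoK, not_forall] at hK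
      obtain ⟨a, b, c, d, hbc, hbd, hcd, t1, t2, t3, -⟩ := hK
      set K : Finset α := {a, b, c, d} with hKdef
      have hK4 : K.card = 4 :=
        Finset.card_eq_four.2 ⟨a, b, c, d, t1.1, t1.2.1, t2.2.1, hbc, hbd, hcd, rfl⟩
      have hKV : K ⊆ V := by
        intro x hx
        simp only [hKdef, Finset.mem_insert, Finset.mem_singleton] at hx
        rcases hx with rfl | rfl | rfl | rfl
        · exact hV _ t1.2.2.2 (by simp)
        · exact hV _ t1.2.2.2 (by simp)
        · exact hV _ t1.2.2.2 (by simp)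
        · exact hV _ t2.2.2.2 (by simp)
      have hdel := deletion_bound hE hB V hV hKV hK4
        (fun k hk k' hk' hne u hu v h => K_facts hE hB hbc hbd hcd t1 t2 t3 hk hk' hne hu h)
      have hcard : (V \ K).card = N - 4 := by rw [Finset.card_sdiff_of_subset hKV, hN, hK4]
      have hih := ih (N - 4) (by omega) (V \ K) (E.filter fun e => Disjoint K e) hcard ?_ ?_ ?_
      · have hsplit := Finset.card_filter_add_card_filter_not (s := E) (fun e => Disjoint K e)
        have e1 : (E.card : ℝ) = ((E.filter fun e => Disjoint K e).card : ℝ) +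
            ((E.filter fun e => ¬ Disjoint K e).card : ℝ) := by exact_mod_cast hsplit.symm
        have e2 : ((E.filter fun e => ¬ Disjoint K e).card : ℝ) ≤ 4 * N := by
          rw [← hN]; exact_mod_cast hdel
        rw [Nat.cast_sub (by omega)] at hih
        have e3 : (12 : ℝ) ≤ N := by exact_mod_cast not_lt.1 hN12
        push_cast at hih
        nlinarith
      · intro e he f hf
        rw [Finset.mem_filter] at he ⊢
        exact ⟨hE e he.1 f hf, Finset.disjoint_of_subset_right hf he.2⟩
      · intro y u c v d h1 h2 n1 n2 n3 n4 h3
        have up : ∀ {x y z : α}, Tr (E.filter fun e => Disjoint K e) x y z → Tr E x y z :=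
          fun h => ⟨h.1, h.2.1, h.2.2.1, (Finset.mem_filter.1 h.2.2.2).1⟩
        exact hB y u c v d (up h1) (up h2) n1 n2 n3 n4 ⟨h3.1, (Finset.mem_filter.1 h3.2).1⟩
      · intro e he
        rw [Finset.mem_filter] at he
        exact Finset.subset_sdiff.2 ⟨hV e he.1, he.2.symm⟩

end aux

lemma bf_of_free {n : ℕ} {E : Finset (Finset (Fin n))} (hE : IsComplex E)
    (h : ¬ HasCopy B E) : BF E := by
  intro y u c v d h1 h2 n1 n2 n3 n4 h3
  apply h
  refine ⟨![y, c, u, v, d], ?_, ?_⟩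
  · have a1 := h1.1
    have a2 := h1.2.1
    have a3 := h1.2.2.1
    have b1 := h2.1
    have b2 := h2.2.1
    have b3 := h2.2.2.1
    intro i j hij
    fin_cases i <;> fin_cases j <;> simp_all
  · intro e he
    simp only [B, dClosure, Finset.mem_biUnion, Finset.mem_powerset] at he
    obtain ⟨s, hs, hes⟩ := he
    refine hE (s.image ![y, c, u, v, d]) ?_ _ (Finset.image_subset_image hes)
    simp only [Finset.mem_insert, Finset.mem_singleton] at hs
    rcases hs with rfl | rfl | rfl
    · simpa [Finset.image_insert] using h3.2
    · simpa [Finset.image_insert] using h1.s23.2.2.2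
    · simpa [Finset.image_insert] using h2.2.2.2

theorem statement1 : ∃ C : ℕ, ∀ n : ℕ, 5 ≤ n →
    (exSC n B : ℝ) ≤ 9 / 8 * (n.choose 2 : ℝ) + 21 / 16 * (n : ℝ) + (C : ℝ) := by
  refine ⟨4096, fun n _ => ?_⟩
  have hmem : exSC n B ∈ {m | ∃ E : Finset (Finset (Fin n)), IsComplex E ∧ ¬ HasCopy B E ∧
      E.card = m} := by
    apply Nat.sSup_mem
    · refine ⟨0, ∅, ?_, ?_, rfl⟩
      · intro e he
        simp at he
      · rintro ⟨f, -, hf⟩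
        have := hf ∅ (by simp [B, dClosure])
        simp at this
    · refine ⟨(Finset.univ : Finset (Finset (Fin n))).card, ?_⟩
      rintro m ⟨E, -, -, rfl⟩
      exact Finset.card_le_card (Finset.subset_univ E)
  obtain ⟨E, hE, hfree, hcard⟩ := hmem
  have := main_bound n Finset.univ E (by simp) hE (bf_of_free hE hfree)
    (fun e _ => Finset.subset_univ e)
  rw [← hcard, Nat.cast_choose_two]
  push_cast
  nlinarith
end

section
/- Let F be a proper 3-uniform hypergraph, let A ⊆ V(F) be nonempty, and let η, ε > 0. Then there is n0 ∈ ℕ such that the following holds for every n ≥ n0. If H is a simplicial complex on n vertices all of whose edges have size at most 3 which satisfies ex^(3)(n,F)/n² + 1 ≥ ((|A|−1)/|A| + η)·(1 + Δ^(3)/2) and e(H) ≥ (1+ε)·(ex^(3)(n,F) + binom(n,2)), then H contains a copy of F^+. -/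
open Finset

/-- `d^(i)(xy)`: number of `i`-edges containing both `x` and `y` -/
def degPair {V : Type*} [DecidableEq V] (E : Finset (Finset V)) (i : ℕ) (x y : V) : ℕ :=
  (E.filter (fun e => e.card = i ∧ x ∈ e ∧ y ∈ e)).card

/-- `Δ^(i)`: maximum of `d^(i)(xy)` over pairs of distinct vertices -/
def maxPairDeg {V : Type*} [DecidableEq V] [Fintype V]
    (E : Finset (Finset V)) (i : ℕ) : ℕ :=
  (Finset.univ : Finset V).offDiag.sup (fun p => degPair E i p.1 p.2)

/-- a 3-uniform hypergraph `F` is proper -/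
def IsProper {α : Type*} (F : Finset (Finset α)) : Prop :=
  ∀ ε : ℝ, 0 < ε → ∃ n0 : ℕ, ∀ n : ℕ, n0 ≤ n →
    (1 + ε) * ((exUnif 3 n F : ℝ) - (exUnif 3 (n - 1) F : ℝ)) ≥ (exUnif 3 n F : ℝ) / n

/-- `F⁺`: downward closure of `F` together with a new vertex (`none`) joined by
2-edges to every vertex of `A` -/
def Fplus {α : Type*} [DecidableEq α] (F : Finset (Finset α)) (A : Finset α) :
    Finset (Finset (Option α)) :=
  dClosure ((F.image (Finset.image Option.some)) ∪
    A.image (fun x => ({Option.none, Option.some x} : Finset (Option α))))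

theorem transfer_copy {α : Type*} {n : ℕ} (F : Finset (Finset α)) (S : Finset (Fin n))
    (G : Finset (Finset (Fin n))) (hG : ∀ e ∈ G, e.card = 3 ∧ e ⊆ S)
    (h : exUnif 3 S.card F < G.card) :
    ∃ f : α → Fin n, Function.Injective f ∧ (∀ x, f x ∈ S) ∧ ∀ e ∈ F, e.image f ∈ G := by
  classical
  let φ : Fin S.card ↪ Fin n := (S.equivFin.symm.toEmbedding).trans (Function.Embedding.subtype _)
  have hφS : ∀ i, φ i ∈ S := fun i => (S.equivFin.symm i).2
  have hφsurj : ∀ y ∈ S, ∃ i, φ i = y := by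
    intro y hy
    refine ⟨S.equivFin ⟨y, hy⟩, ?_⟩
    simp [φ]
  let G' : Finset (Finset (Fin S.card)) := univ.filter (fun e => e.map φ ∈ G)
  have hcard : G'.card = G.card := by
    have : G = G'.map (Finset.mapEmbedding φ).toEmbedding := by
      ext e
      simp only [G', Finset.mem_map, Finset.mem_filter, Finset.mem_univ, true_and]
      constructor
      · intro he
        have h1 : (univ.filter (fun i => φ i ∈ e)).map φ = e := by
          ext y
          simp only [Finset.mem_map, Finset.mem_filter, Finset.mem_univ, true_and]
          constructor
          · rintro ⟨i, hi, rfl⟩; exact hi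
          · intro hy
            obtain ⟨i, rfl⟩ := hφsurj y ((hG e he).2 hy)
            exact ⟨i, hy, rfl⟩
        refine ⟨_, ?_, h1⟩
        rw [h1]; exact he
      · rintro ⟨d, hd, rfl⟩
        exact hd
    rw [this, Finset.card_map]
  have hcopy : HasCopy F G' := by
    by_contra hno
    have : G'.card ≤ exUnif 3 S.card F := by
      apply le_csSup
      · refine ⟨Fintype.card (Finset (Fin S.card)), ?_⟩
        rintro m ⟨E, -, -, rfl⟩
        exact Finset.card_le_univ E
      · refine ⟨G', ?_, hno, rfl⟩
        intro e he
        have := (hG _ (Finset.mem_filter.mp he).2).1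
        simpa using this
    omega
  obtain ⟨g, hg, hgF⟩ := hcopy
  refine ⟨fun x => φ (g x), φ.injective.comp hg, fun x => hφS _, ?_⟩
  intro e he
  have := (Finset.mem_filter.mp (hgF e he)).2
  rw [Finset.map_eq_image, Finset.image_image] at this
  exact this

theorem degree_bound {n : ℕ} (E : Finset (Finset (Fin n))) (hE : IsComplex E)
    (h3 : ∀ e ∈ E, e.card ≤ 3) (S : Finset (Fin n)) (x : Fin n) :
    2 * (E.filter (fun e => e ⊆ S ∧ x ∈ e)).card ≤
      2 + (S.filter (fun y => y ≠ x ∧ ({x, y} : Finset (Fin n)) ∈ E)).card * (2 + maxPairDeg E 3) := by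
  classical
  set N := S.filter (fun y => y ≠ x ∧ ({x, y} : Finset (Fin n)) ∈ E) with hN
  set T := E.filter (fun e => (e ⊆ S ∧ x ∈ e) ∧ e.card = 3) with hT
  have hT2 : T.card * 2 ≤ N.card * maxPairDeg E 3 := by
    apply Finset.card_mul_le_card_mul (fun e y => y ∈ e)
    · intro e he
      obtain ⟨heE, ⟨heS, hxe⟩, hc⟩ := Finset.mem_filter.mp he
      have : e.erase x ⊆ Finset.bipartiteAbove (fun e y => y ∈ e) N e := by
        intro y hy
        rw [Finset.mem_erase] at hy
        rw [Finset.mem_bipartiteAbove]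
        refine ⟨Finset.mem_filter.mpr ⟨heS hy.2, hy.1, hE e heE _ ?_⟩, hy.2⟩
        intro z hz
        simp only [Finset.mem_insert, Finset.mem_singleton] at hz
        rcases hz with rfl | rfl
        · exact hxe
        · exact hy.2
      have h2 := Finset.card_le_card this
      rw [Finset.card_erase_of_mem hxe, hc] at h2
      exact h2
    · intro y hy
      obtain ⟨hyS, hyx, -⟩ := Finset.mem_filter.mp hy
      calc _ ≤ degPair E 3 x y := by
            apply Finset.card_le_card
            intro e he
            obtain ⟨he, hye⟩ := Finset.mem_bipartiteBelow _ |>.mp he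
            obtain ⟨heE, ⟨heS, hxe⟩, hc⟩ := Finset.mem_filter.mp he
            exact Finset.mem_filter.mpr ⟨heE, hc, hxe, hye⟩
        _ ≤ maxPairDeg E 3 := by
            exact Finset.le_sup (f := fun p : Fin n × Fin n => degPair E 3 p.1 p.2)
              (b := (x, y)) (by simp [Ne.symm hyx])
  have hsub : E.filter (fun e => e ⊆ S ∧ x ∈ e) ⊆
      ({{x}} ∪ N.image (fun y => ({x, y} : Finset (Fin n)))) ∪ T := by
    intro e he
    obtain ⟨heE, heS, hxe⟩ := Finset.mem_filter.mp he
    have hle := h3 e heE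
    have hpos : 0 < e.card := Finset.card_pos.mpr ⟨x, hxe⟩
    simp only [Finset.mem_union, Finset.mem_singleton, Finset.mem_image]
    have : e.card = 1 ∨ e.card = 2 ∨ e.card = 3 := by omega
    rcases this with h | h | h
    · left; left
      obtain ⟨z, rfl⟩ := Finset.card_eq_one.mp h
      simp at hxe; rw [hxe]
    · left; right
      have h1 : (e.erase x).card = 1 := by rw [Finset.card_erase_of_mem hxe, h]
      obtain ⟨y, hy⟩ := Finset.card_eq_one.mp h1
      have hye : y ∈ e.erase x := by rw [hy]; simp
      have he2 : ({x, y} : Finset (Fin n)) = e := by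
        rw [← hy]; exact Finset.insert_erase hxe
      refine ⟨y, Finset.mem_filter.mpr ⟨heS (Finset.mem_of_mem_erase hye),
        Finset.ne_of_mem_erase hye, ?_⟩, he2⟩
      rw [he2]; exact heE
    · right
      exact Finset.mem_filter.mpr ⟨heE, ⟨heS, hxe⟩, h⟩
  have hc := Finset.card_le_card hsub
  have h1 := Finset.card_union_le ({{x}} ∪ N.image (fun y => ({x, y} : Finset (Fin n)))) T
  have h2 := Finset.card_union_le ({{x}} : Finset (Finset (Fin n)))
    (N.image (fun y => ({x, y} : Finset (Fin n))))
  have h4 : (N.image (fun y => ({x, y} : Finset (Fin n)))).card ≤ N.card := Finset.card_image_le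
  have h5 : ({{x}} : Finset (Finset (Fin n))).card = 1 := Finset.card_singleton _
  rw [Nat.mul_add]
  omega

theorem edges_bound {n : ℕ} (E : Finset (Finset (Fin n)))
    (h3 : ∀ e ∈ E, e.card ≤ 3) (S : Finset (Fin n)) :
    (E.filter (fun e => e ⊆ S)).card ≤
      1 + S.card + S.card.choose 2 + (E.filter (fun e => e.card = 3 ∧ e ⊆ S)).card := by
  classical
  have hsub : E.filter (fun e => e ⊆ S) ⊆
      ((S.powersetCard 0 ∪ S.powersetCard 1) ∪ S.powersetCard 2) ∪
        E.filter (fun e => e.card = 3 ∧ e ⊆ S) := by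
    intro e he
    obtain ⟨heE, heS⟩ := Finset.mem_filter.mp he
    have := h3 e heE
    simp only [Finset.mem_union, Finset.mem_powersetCard, Finset.mem_filter, heS, heE,
      true_and, and_true]
    omega
  have hc := Finset.card_le_card hsub
  have h1 := Finset.card_union_le ((S.powersetCard 0 ∪ S.powersetCard 1) ∪ S.powersetCard 2)
    (E.filter (fun e => e.card = 3 ∧ e ⊆ S))
  have h2 := Finset.card_union_le (S.powersetCard 0 ∪ S.powersetCard 1) (S.powersetCard 2)
  have h4 := Finset.card_union_le (S.powersetCard 0) (S.powersetCard 1)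
  simp only [Finset.card_powersetCard, Nat.choose_zero_right, Nat.choose_one_right] at *
  omega

theorem ex_growth (g : ℕ → ℕ) (δ : ℝ) (hδ : 0 < δ) (n0 : ℕ)
    (h : ∀ n : ℕ, n0 ≤ n → (1 + δ) * ((g n : ℝ) - (g (n - 1) : ℝ)) ≥ (g n : ℝ) / n)
    (n : ℕ) (hn : 0 < n) (k : ℕ) : ∀ m : ℕ, m + k = n → n0 ≤ m →
      (g m : ℝ) ≤ g n * (m / n + δ) := by
  have hnR : (0 : ℝ) < n := by exact_mod_cast hn
  induction k with
  | zero =>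
    intro m hm _
    have : m = n := by omega
    subst this
    rw [div_self hnR.ne']
    have : (0 : ℝ) ≤ g m := by positivity
    nlinarith
  | succ k ih =>
    intro m hm hm0
    have h1 := ih (m + 1) (by omega) (by omega)
    have h2 := h (m + 1) (by omega)
    simp only [Nat.add_sub_cancel] at h2
    have hmn : ((m + 1 : ℕ) : ℝ) ≤ n := by exact_mod_cast (by omega : m + 1 ≤ n)
    push_cast at h1 h2 hmn
    set j : ℝ := (m : ℝ) + 1 with hj
    have hjpos : 0 < j := by positivity
    have hm' : (m : ℝ) = j - 1 := by rw [hj]; ring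
    rw [hm']
    have hgn : (0 : ℝ) ≤ g n := by positivity
    -- (1+δ) g m ≤ (1 + δ - 1/j) g (m+1)
    have h3 : (1 + δ) * (g m : ℝ) ≤ (1 + δ - 1 / j) * g (m + 1) := by
      have : (g (m + 1) : ℝ) / j = 1 / j * g (m + 1) := by ring
      rw [this] at h2
      linarith
    have hj1 : 1 / j ≤ 1 := by rw [div_le_one hjpos]; rw [hj]; linarith [Nat.cast_nonneg (α := ℝ) m]
    have h4 : (1 + δ) * (g m : ℝ) ≤ (1 + δ - 1 / j) * (g n * (j / n + δ)) :=
      h3.trans (mul_le_mul_of_nonneg_left h1 (by linarith))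
    have h5 : (1 + δ - 1 / j) * (j / n + δ) ≤ (1 + δ) * ((j - 1) / n + δ) := by
      have e1 : (1 + δ - 1 / j) * (j / n + δ) =
          (1 + δ) * (j / n + δ) - 1 / n - δ * (1 / j) := by
        field_simp
        ring
      have e2 : (1 + δ) * ((j - 1) / n + δ) = (1 + δ) * (j / n + δ) - (1 + δ) * (1 / n) := by
        field_simp
        ring
      rw [e1, e2]
      have : 1 / (n : ℝ) ≤ 1 / j := one_div_le_one_div_of_le hjpos hmn
      nlinarith
    have h6 : (1 + δ) * (g m : ℝ) ≤ (1 + δ) * (g n * ((j - 1) / n + δ)) := by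
      calc _ ≤ _ := h4
        _ = g n * ((1 + δ - 1 / j) * (j / n + δ)) := by ring
        _ ≤ g n * ((1 + δ) * ((j - 1) / n + δ)) := mul_le_mul_of_nonneg_left h5 hgn
        _ = _ := by ring
    exact le_of_mul_le_mul_left h6 (by linarith)

theorem choose_two_real (n : ℕ) : ((n.choose 2 : ℕ) : ℝ) = n * (n - 1) / 2 :=
  Nat.cast_choose_two ℝ n

theorem numeric_bound (X ε n m : ℝ) (hX : 0 ≤ X) (hε : 0 < ε) (hn : 1 ≤ n) (hm : 0 ≤ m)
    (hmn : m ≤ n) (h1 : 1 ≤ ε * n) (h2 : 6 ≤ ε * (n - 1)) :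
    X * (m / n + ε / 2) + m * (m - 1) / 2 + m + 1 + (n - 2) ≤
      (1 + ε) * (X + n * (n - 1) / 2) - (X / n ^ 2 + 1) * ((n * (n + 1) - m * (m + 1)) / 2)
        - (n - m) := by
  have hn0 : 0 < n := by linarith
  have hA : m / n + ε / 2 ≤ 1 + ε - (n * (n + 1) - m * (m + 1)) / 2 / n ^ 2 := by
    rw [← sub_nonneg]
    have : 1 + ε - (n * (n + 1) - m * (m + 1)) / 2 / n ^ 2 - (m / n + ε / 2) =
        ((n - m) ^ 2 + n * (ε * n - 1) + m) / (2 * n ^ 2) := by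
      field_simp
      ring
    rw [this]
    have := mul_nonneg hn0.le (sub_nonneg.mpr h1)
    positivity
  have hB := mul_le_mul_of_nonneg_left hA hX
  have hC : X * (1 + ε - (n * (n + 1) - m * (m + 1)) / 2 / n ^ 2) =
    (1 + ε) * X - X / n ^ 2 * ((n * (n + 1) - m * (m + 1)) / 2) := by ring
  have hD := mul_le_mul_of_nonneg_left h2 hn0.le
  nlinarith

theorem plus_copy {α : Type*} [DecidableEq α] {n : ℕ} (F : Finset (Finset α)) (A : Finset α)
    (E : Finset (Finset (Fin n))) (hE : IsComplex E) (f : α → Fin n)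
    (hf : Function.Injective f) (hF : ∀ e ∈ F, e.image f ∈ E) (b : Fin n)
    (hb : ∀ x, f x ≠ b) (hbA : ∀ x ∈ A, ({f x, b} : Finset (Fin n)) ∈ E) :
    HasCopy (Fplus F A) E := by
  refine ⟨fun o => o.elim b f, ?_, ?_⟩
  · intro o1 o2 h
    cases o1 <;> cases o2 <;> simp at h
    · rfl
    · exact absurd h.symm (hb _)
    · exact absurd h (hb _)
    · rw [hf h]
  · intro e he
    simp only [Fplus, dClosure, Finset.mem_biUnion, Finset.mem_union, Finset.mem_image,
      Finset.mem_powerset] at he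
    obtain ⟨d, hd, hed⟩ := he
    refine hE (d.image (fun o : Option α => o.elim b f)) ?_ _ (Finset.image_subset_image hed)
    rcases hd with ⟨c, hc, rfl⟩ | ⟨x, hx, rfl⟩
    · rw [Finset.image_image]
      exact hF c hc
    · have := hbA x hx
      rw [Finset.pair_comm] at this
      simpa [Finset.image_insert] using this

set_option maxHeartbeats 1000000 in
theorem statement4 {α : Type*} [DecidableEq α] (F : Finset (Finset α))
    (hunif : ∀ e ∈ F, e.card = 3) (hproper : IsProper F)
    (A : Finset α) (hA : A.Nonempty) (η ε : ℝ) (hη : 0 < η) (hε : 0 < ε) :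
    ∃ n0 : ℕ, ∀ n : ℕ, n0 ≤ n → ∀ E : Finset (Finset (Fin n)),
      IsComplex E → (∀ e ∈ E, e.card ≤ 3) →
      (exUnif 3 n F : ℝ) / (n : ℝ) ^ 2 + 1 ≥
        (((A.card : ℝ) - 1) / (A.card : ℝ) + η) * (1 + (maxPairDeg E 3 : ℝ) / 2) →
      (E.card : ℝ) ≥ (1 + ε) * ((exUnif 3 n F : ℝ) + (n.choose 2 : ℝ)) →
      HasCopy (Fplus F A) E := by
  classical
  obtain ⟨n1, hn1⟩ := hproper (ε / 2) (by positivity)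
  obtain ⟨M1, hM1⟩ := exists_nat_gt ((Nat.card α : ℝ) / η)
  obtain ⟨M2, hM2⟩ := exists_nat_gt (6 / ε)
  set M := max n1 M1 with hM
  refine ⟨2 ^ M + 3 + M2, ?_⟩
  intro n hn E hE h3 hΔ hcard
  have h2M : 0 < 2 ^ M := by positivity
  set X : ℝ := (exUnif 3 n F : ℝ) with hX
  have hX0 : 0 ≤ X := by positivity
  have hnM2 : (M2 : ℝ) + 1 ≤ n := by exact_mod_cast (by omega : M2 + 1 ≤ n)
  have hnpos : 0 < n := by omega
  have hn1R : (1 : ℝ) ≤ n := by exact_mod_cast hnpos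
  have hb2 : 6 ≤ ε * ((n : ℝ) - 1) := by
    rw [div_lt_iff₀ hε] at hM2
    nlinarith
  have hb1 : 1 ≤ ε * (n : ℝ) := by nlinarith
  set K : ℝ := X / (n : ℝ) ^ 2 + 1 with hK
  let L : ℝ → ℝ := fun m => (1 + ε) * (X + n * (n - 1) / 2) -
    K * ((n * (n + 1) - m * (m + 1)) / 2) - (n - m)
  let P : Finset (Finset (Fin n)) := univ.filter
    (fun S => L S.card ≤ ((E.filter (fun e => e ⊆ S)).card : ℝ))
  have hP : P.Nonempty := by
    refine ⟨univ, Finset.mem_filter.mpr ⟨Finset.mem_univ _, ?_⟩⟩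
    rw [choose_two_real] at hcard
    simp only [L, Finset.card_univ, Fintype.card_fin, Finset.subset_univ, Finset.filter_true]
    linarith
  obtain ⟨S, hSP, hSmin⟩ := P.exists_min_image Finset.card hP
  have hSL : L S.card ≤ ((E.filter (fun e => e ⊆ S)).card : ℝ) := (Finset.mem_filter.mp hSP).2
  have hmn : S.card ≤ n := by simpa using Finset.card_le_univ S
  have hnum := numeric_bound X ε n S.card hX0 hε hn1R (by positivity) (by exact_mod_cast hmn)
    hb1 hb2
  have hSL' := hnum.trans hSL
  -- the set is large
  have hMm : M ≤ S.card := by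
    by_contra hlt
    push Not at hlt
    have h1 : (E.filter (fun e => e ⊆ S)).card ≤ 2 ^ S.card := by
      rw [← Finset.card_powerset]
      apply Finset.card_le_card
      intro e he
      exact Finset.mem_powerset.mpr (Finset.mem_filter.mp he).2
    have h2 : 2 ^ S.card ≤ 2 ^ M := Nat.pow_le_pow_right (by norm_num) hlt.le
    have h4 : ((E.filter (fun e => e ⊆ S)).card : ℝ) + 3 ≤ n := by
      exact_mod_cast (by omega : (E.filter (fun e => e ⊆ S)).card + 3 ≤ n)
    have h5 : 0 ≤ X * ((S.card : ℝ) / n + ε / 2) := by positivity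
    have h6 : (0 : ℝ) ≤ S.card * ((S.card : ℝ) - 1) / 2 := by
      rw [← choose_two_real]; positivity
    have h7 : (0 : ℝ) ≤ S.card := by positivity
    linarith
  -- a copy of F inside S
  have hgr := ex_growth (fun k => exUnif 3 k F) (ε / 2) (by positivity) n1 hn1 n hnpos
    (n - S.card) S.card (by omega) ((le_max_left _ _).trans hMm)
  have hn3 : (3 : ℝ) ≤ n := by exact_mod_cast (by omega : 3 ≤ n)
  have hex : exUnif 3 S.card F < (E.filter (fun e => e.card = 3 ∧ e ⊆ S)).card := by
    have hb := edges_bound E h3 S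
    have hb' : ((E.filter (fun e => e ⊆ S)).card : ℝ) ≤
      1 + S.card + (S.card.choose 2 : ℕ) +
        ((E.filter (fun e => e.card = 3 ∧ e ⊆ S)).card : ℝ) := by exact_mod_cast hb
    rw [choose_two_real] at hb'
    have : (exUnif 3 S.card F : ℝ) < ((E.filter (fun e => e.card = 3 ∧ e ⊆ S)).card : ℝ) := by
      linarith
    exact_mod_cast this
  obtain ⟨f, hf, hfS, hfE⟩ := transfer_copy F S _
    (fun e he => (Finset.mem_filter.mp he).2) hex
  have : Finite α := Finite.of_injective f hf
  have : Fintype α := Fintype.ofFinite α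
  -- minimum degree
  let N : Fin n → Finset (Fin n) := fun x =>
    S.filter (fun y => y ≠ x ∧ ({x, y} : Finset (Fin n)) ∈ E)
  have hdeg : ∀ x ∈ S, (((A.card : ℝ) - 1) / A.card + η) * S.card ≤ (N x).card := by
    intro x hx
    have hxd : K * S.card + 1 ≤ ((E.filter (fun e => e ⊆ S ∧ x ∈ e)).card : ℝ) := by
      by_contra hlt
      push Not at hlt
      have hc : (S.erase x).card + 1 = S.card := Finset.card_erase_add_one hx
      have hcR : ((S.erase x).card : ℝ) = S.card - 1 := by
        rw [← hc]; push_cast; ring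
      have hmem : S.erase x ∈ P := by
        refine Finset.mem_filter.mpr ⟨Finset.mem_univ _, ?_⟩
        have hsplit : (E.filter (fun e => e ⊆ S)).card =
            (E.filter (fun e => e ⊆ S ∧ x ∈ e)).card +
            (E.filter (fun e => e ⊆ S.erase x)).card := by
          rw [← Finset.card_filter_add_card_filter_not (s := E.filter (fun e => e ⊆ S))
            (fun e => x ∈ e), Finset.filter_filter, Finset.filter_filter]
          congr 2
          ext e
          simp only [Finset.mem_filter, Finset.subset_erase]
        have hsR : ((E.filter (fun e => e ⊆ S)).card : ℝ) =
            ((E.filter (fun e => e ⊆ S ∧ x ∈ e)).card : ℝ) +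
            ((E.filter (fun e => e ⊆ S.erase x)).card : ℝ) := by exact_mod_cast hsplit
        have hLL : L (S.erase x).card = L S.card - K * S.card - 1 := by
          simp only [L, hcR]; ring
        rw [hLL]
        linarith
      have := hSmin _ hmem
      omega
    have hd := degree_bound E hE h3 S x
    have hdR : 2 * ((E.filter (fun e => e ⊆ S ∧ x ∈ e)).card : ℝ) ≤
      2 + ((N x).card : ℝ) * (2 + maxPairDeg E 3) := by exact_mod_cast hd
    have hDpos : (0 : ℝ) < 1 + (maxPairDeg E 3 : ℝ) / 2 := by positivity
    have h1 : (((A.card : ℝ) - 1) / A.card + η) * (1 + (maxPairDeg E 3 : ℝ) / 2) * S.card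
      ≤ K * S.card := mul_le_mul_of_nonneg_right hΔ (by positivity)
    apply le_of_mul_le_mul_right _ hDpos
    linarith
  -- common neighbours
  have haR : (1 : ℝ) ≤ A.card := by exact_mod_cast hA.card_pos
  let B : Finset (Fin n) := (A.biUnion (fun x => S \ N (f x))) ∪ univ.image f
  have hBc : (B.card : ℝ) < S.card := by
    have h1 : B.card ≤ ∑ x ∈ A, (S \ N (f x)).card + Fintype.card α := by
      refine (Finset.card_union_le _ _).trans (add_le_add Finset.card_biUnion_le ?_)
      exact Finset.card_image_le
    have h1R : (B.card : ℝ) ≤ ∑ x ∈ A, ((S \ N (f x)).card : ℝ) + Fintype.card α := by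
      exact_mod_cast h1
    have h2 : ∑ x ∈ A, ((S \ N (f x)).card : ℝ) ≤
        ∑ x ∈ A, (1 / (A.card : ℝ) - η) * S.card := by
      apply Finset.sum_le_sum
      intro x _
      have h := hdeg (f x) (hfS x)
      have hs : (S \ N (f x)).card + (N (f x)).card = S.card :=
        Finset.card_sdiff_add_card_eq_card (Finset.filter_subset _ _)
      have hsR : ((S \ N (f x)).card : ℝ) + (N (f x)).card = S.card := by exact_mod_cast hs
      have : ((A.card : ℝ) - 1) / A.card = 1 - 1 / A.card := by
        field_simp
      rw [this] at h
      linarith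
    rw [Finset.sum_const, nsmul_eq_mul] at h2
    have h4 : (A.card : ℝ) * ((1 / (A.card : ℝ) - η) * S.card) = S.card - A.card * (η * S.card) := by
      field_simp
    rw [h4] at h2
    have h5 : (M1 : ℝ) ≤ S.card := by exact_mod_cast (le_max_right _ _).trans hMm
    rw [div_lt_iff₀ hη, Nat.card_eq_fintype_card] at hM1
    have h6 : (Fintype.card α : ℝ) < η * S.card := by
      have := mul_le_mul_of_nonneg_right h5 hη.le
      linarith
    have h7 : η * S.card ≤ A.card * (η * S.card) := by
      exact le_mul_of_one_le_left (by positivity) haR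
    linarith
  have hBc' : B.card < S.card := by exact_mod_cast hBc
  obtain ⟨b, hbS, hbB⟩ := Finset.exists_mem_notMem_of_card_lt_card hBc'
  simp only [B, Finset.mem_union, Finset.mem_biUnion, Finset.mem_sdiff, Finset.mem_image,
    Finset.mem_univ, true_and, not_or, not_exists, not_and, not_not] at hbB
  exact plus_copy F A E hE f hf (fun e he => (Finset.mem_filter.mp (hfE e he)).1) b hbB.2
    (fun x hx => (Finset.mem_filter.mp (hbB.1 x hx hbS)).2.2)
end

section
/- Let F be a proper 3-uniform hypergraph with v(F) vertices, let A ⊆ V(F) be nonempty, and let ε > 0. Then there is n0 ∈ ℕ such that the following holds for every n ≥ n0. Let H be a simplicial complex on n vertices satisfying (e³·n^{n−2}/(n+3)^n)·(ex^(3)(n,F) + n²) ≥ ((|A|−1)/|A| + (1/n)·(v(F)−|A|)/|A|)·(1 + Σ_{i≥2} Δ^(i+1)/i) (where e is Euler's number and the sum over i ≥ 2 is finite since Δ^(j) = 0 for j exceeding the largest edge size of H) and e(H) ≥ (1+ε)·(ex^(3)(n,F) + binom(n,2)). If either (1) H contains no edge of size 4, or (2) F is a subhypergraph of the complete 3-uniform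 hypergraph on 4 vertices, then H contains a copy of F^+. -/
open Finset

section helpers

lemma le_exUnif {α : Type*} (n : ℕ) (F : Finset (Finset α)) (G : Finset (Finset (Fin n)))
    (h3 : ∀ e ∈ G, e.card = 3) (hc : ¬ HasCopy F G) : G.card ≤ exUnif 3 n F := by
  unfold exUnif
  apply le_csSup
  · refine ⟨(Finset.univ : Finset (Finset (Fin n))).card, ?_⟩
    rintro m ⟨E, -, -, rfl⟩
    exact Finset.card_le_card (Finset.subset_univ _)
  · exact ⟨G, h3, hc, rfl⟩

/-- 2-neighbourhood -/
def nb {V : Type*} [DecidableEq V] [Fintype V] (G : Finset (Finset V)) (x : V) : Finset V :=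
  Finset.univ.filter (fun y => y ≠ x ∧ ({x, y} : Finset V) ∈ G)

/-- induced complex -/
def ind {V : Type*} [DecidableEq V] (E : Finset (Finset V)) (W : Finset V) : Finset (Finset V) :=
  E.filter (fun e => e ⊆ W)

lemma ind_complex {V : Type*} [DecidableEq V] {E : Finset (Finset V)} (hE : IsComplex E)
    (W : Finset V) : IsComplex (ind E W) := by
  intro e he f hf
  simp only [ind, Finset.mem_filter] at he ⊢
  exact ⟨hE e he.1 f hf, hf.trans he.2⟩

lemma deg_le_pow {V : Type*} [DecidableEq V] [Fintype V] {G : Finset (Finset V)}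
    (hG : IsComplex G) (x : V) :
    (G.filter (fun e => x ∈ e)).card ≤ 2 ^ (nb G x).card := by
  rw [← Finset.card_powerset]
  refine (Finset.card_le_card ?_).trans
    (Finset.card_image_le (f := fun s : Finset V => insert x s))
  intro e he
  simp only [Finset.mem_filter] at he
  simp only [Finset.mem_image, Finset.mem_powerset]
  refine ⟨e.erase x, ?_, Finset.insert_erase he.2⟩
  intro y hy
  simp only [Finset.mem_erase] at hy
  simp only [nb, Finset.mem_filter, Finset.mem_univ, true_and]
  refine ⟨hy.1, hG e he.1 _ ?_⟩
  intro z hz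
  simp only [Finset.mem_insert, Finset.mem_singleton] at hz
  rcases hz with rfl | rfl
  · exact he.2
  · exact hy.2

lemma degPair_le_max {V : Type*} [DecidableEq V] [Fintype V] (E : Finset (Finset V)) (i : ℕ)
    {x y : V} (h : x ≠ y) : degPair E i x y ≤ maxPairDeg E i := by
  unfold maxPairDeg
  exact Finset.le_sup (f := fun p : V × V => degPair E i p.1 p.2) (b := (x, y)) (by simp [h])

lemma layer_le {V : Type*} [DecidableEq V] [Fintype V] {E G : Finset (Finset V)}
    (hGE : G ⊆ E) (hG : IsComplex G) (x : V) (i : ℕ) :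
    i * (G.filter (fun e => x ∈ e ∧ e.card = i + 1)).card
      ≤ (nb G x).card * maxPairDeg E (i + 1) := by
  have h1 : ∀ e ∈ G.filter (fun e => x ∈ e ∧ e.card = i + 1),
      i ≤ ((nb G x).filter (fun y => y ∈ e)).card := by
    intro e he
    simp only [Finset.mem_filter] at he
    have : (e.erase x).card = i := by
      rw [Finset.card_erase_of_mem he.2.1, he.2.2]; simp
    rw [← this]
    apply Finset.card_le_card
    intro y hy
    simp only [Finset.mem_erase] at hy
    simp only [nb, Finset.mem_filter, Finset.mem_univ, true_and]
    refine ⟨⟨hy.1, hG e he.1 _ ?_⟩, hy.2⟩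
    intro z hz
    simp only [Finset.mem_insert, Finset.mem_singleton] at hz
    rcases hz with rfl | rfl
    · exact he.2.1
    · exact hy.2
  calc i * (G.filter (fun e => x ∈ e ∧ e.card = i + 1)).card
      = ∑ e ∈ G.filter (fun e => x ∈ e ∧ e.card = i + 1), i := by
        rw [Finset.sum_const, smul_eq_mul, mul_comm]
    _ ≤ ∑ e ∈ G.filter (fun e => x ∈ e ∧ e.card = i + 1),
          ((nb G x).filter (fun y => y ∈ e)).card := Finset.sum_le_sum h1
    _ = ∑ y ∈ nb G x,
          ((G.filter (fun e => x ∈ e ∧ e.card = i + 1)).filter (fun e => y ∈ e)).card := by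
        simp only [Finset.card_filter]
        rw [Finset.sum_comm]
    _ ≤ ∑ y ∈ nb G x, maxPairDeg E (i + 1) := by
        apply Finset.sum_le_sum
        intro y hy
        simp only [nb, Finset.mem_filter, Finset.mem_univ, true_and] at hy
        refine le_trans ?_ (degPair_le_max E (i + 1) (Ne.symm hy.1))
        unfold degPair
        apply Finset.card_le_card
        intro e he
        simp only [Finset.mem_filter] at he ⊢
        exact ⟨hGE he.1.1, he.1.2.2, he.1.2.1, he.2⟩
    _ = _ := by rw [Finset.sum_const, smul_eq_mul]

lemma deg_le {n : ℕ} {E G : Finset (Finset (Fin n))}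
    (hGE : G ⊆ E) (hG : IsComplex G) (x : Fin n) :
    ((G.filter (fun e => x ∈ e)).card : ℝ) ≤
      1 + (nb G x).card * (1 + ∑ i ∈ Finset.Icc 2 n, (maxPairDeg E (i + 1) : ℝ) / (i : ℝ)) := by
  have hsub : G.filter (fun e => x ∈ e) ⊆ ({{x}} ∪ (nb G x).image (fun y => {x, y})) ∪
      (Finset.Icc 2 n).biUnion (fun i => G.filter (fun e => x ∈ e ∧ e.card = i + 1)) := by
    intro e he
    simp only [Finset.mem_filter] at he
    simp only [Finset.mem_union, Finset.mem_singleton, Finset.mem_image, Finset.mem_biUnion,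
      Finset.mem_filter, Finset.mem_Icc]
    have hc : (e.erase x).card + 1 = e.card := Finset.card_erase_add_one he.2
    have hn : e.card ≤ n := by simpa using Finset.card_le_univ e
    rcases Nat.lt_or_ge (e.erase x).card 2 with h | h
    · left
      interval_cases h' : (e.erase x).card
      · left
        rw [Finset.card_eq_zero] at h'
        rw [← Finset.insert_erase he.2, h']; rfl
      · right
        obtain ⟨y, hy⟩ := Finset.card_eq_one.mp h'
        have hyx : y ∈ e.erase x := by rw [hy]; simp
        have : ({x, y} : Finset (Fin n)) = e := by
          conv_rhs => rw [← Finset.insert_erase he.2, hy]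
        refine ⟨y, ?_, this⟩
        simp only [nb, Finset.mem_filter, Finset.mem_univ, true_and]
        rw [this]
        exact ⟨Finset.ne_of_mem_erase hyx, he.1⟩
    · right
      exact ⟨(e.erase x).card, ⟨h, by omega⟩, he.1, he.2, hc.symm⟩
  have hcard : (G.filter (fun e => x ∈ e)).card ≤ 1 + (nb G x).card +
      ∑ i ∈ Finset.Icc 2 n, (G.filter (fun e => x ∈ e ∧ e.card = i + 1)).card := by
    refine (Finset.card_le_card hsub).trans ((Finset.card_union_le _ _).trans ?_)
    refine Nat.add_le_add ((Finset.card_union_le _ _).trans ?_) Finset.card_biUnion_le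
    refine Nat.add_le_add (by simp) Finset.card_image_le
  have hcard' : ((G.filter (fun e => x ∈ e)).card : ℝ) ≤ 1 + (nb G x).card +
      ∑ i ∈ Finset.Icc 2 n, ((G.filter (fun e => x ∈ e ∧ e.card = i + 1)).card : ℝ) := by
    exact_mod_cast hcard
  have hs : ∑ i ∈ Finset.Icc 2 n, ((G.filter (fun e => x ∈ e ∧ e.card = i + 1)).card : ℝ) ≤
      (nb G x).card * ∑ i ∈ Finset.Icc 2 n, (maxPairDeg E (i + 1) : ℝ) / (i : ℝ) := by
    rw [Finset.mul_sum]
    apply Finset.sum_le_sum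
    intro i hi
    have h2 : 2 ≤ i := (Finset.mem_Icc.mp hi).1
    have hi0 : (0 : ℝ) < i := by exact_mod_cast (by omega : 0 < i)
    rw [← mul_div_assoc, le_div_iff₀ hi0, mul_comm]
    exact_mod_cast layer_le hGE hG x i
  rw [mul_add, mul_one]
  linarith

lemma exists_good {V : Type*} [DecidableEq V] [Fintype V] (E : Finset (Finset V))
    (P : ℕ → ℝ) (bad : Finset V → V → Prop)
    (h : ∀ W x, x ∈ W → bad W x →
      (((ind E W).filter (fun e => x ∈ e)).card : ℝ) < P W.card - P (W.card - 1)) :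
    ∃ W : Finset V, (∀ x ∈ W, ¬ bad W x) ∧
      (E.card : ℝ) - P (Fintype.card V) + P W.card ≤ (ind E W).card := by
  obtain ⟨W, -, hW⟩ := Finset.exists_max_image (Finset.univ : Finset (Finset V))
    (fun W => ((ind E W).card : ℝ) - P W.card) ⟨∅, Finset.mem_univ _⟩
  refine ⟨W, ?_, ?_⟩
  · intro x hx hb
    have h1 := h W x hx hb
    have h2 := hW (W.erase x) (Finset.mem_univ _)
    rw [Finset.card_erase_of_mem hx] at h2
    have h3 : (ind E W).card ≤ (ind E (W.erase x)).card +
        ((ind E W).filter (fun e => x ∈ e)).card := by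
      refine (Finset.card_le_card ?_).trans (Finset.card_union_le _ _)
      intro e he
      simp only [ind, Finset.mem_union, Finset.mem_filter] at he ⊢
      by_cases hxe : x ∈ e
      · right; exact ⟨he, hxe⟩
      · left; exact ⟨he.1, Finset.subset_erase.mpr ⟨he.2, hxe⟩⟩
    have h3' : ((ind E W).card : ℝ) ≤ (ind E (W.erase x)).card +
        ((ind E W).filter (fun e => x ∈ e)).card := by exact_mod_cast h3
    linarith
  · have h2 := hW Finset.univ (Finset.mem_univ _)
    have h3 : ind E Finset.univ = E := by
      simp [ind]
    rw [h3, Finset.card_univ] at h2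
    linarith

lemma extend_copy {α V : Type*} [DecidableEq α] [Fintype α] [DecidableEq V] [Fintype V]
    (F : Finset (Finset α)) (A : Finset α) (hA : A.Nonempty)
    (E : Finset (Finset V)) (hE : IsComplex E) (W : Finset V)
    (f : α → V) (hf : Function.Injective f) (hfW : ∀ a, f a ∈ W)
    (hFE : ∀ e ∈ F, e.image f ∈ E)
    (hdeg : ∀ x ∈ W, (A.card - 1) * W.card + (Fintype.card α - A.card)
      < A.card * (nb (ind E W) x).card) :
    HasCopy (Fplus F A) E := by
  have key : ∃ y, (∀ a, f a ≠ y) ∧ ∀ a ∈ A, ({f a, y} : Finset V) ∈ E := by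
    by_contra hno
    push Not at hno
    have hs1 : A.card * ((A.card - 1) * W.card + (Fintype.card α - A.card)) <
        A.card * ∑ a ∈ A, (nb (ind E W) (f a)).card := by
      rw [Finset.mul_sum, ← smul_eq_mul, ← Finset.sum_const]
      exact Finset.sum_lt_sum_of_nonempty hA (fun a _ => hdeg (f a) (hfW a))
    have hs2 : (A.card - 1) * W.card + (Fintype.card α - A.card) <
        ∑ a ∈ A, (nb (ind E W) (f a)).card := lt_of_mul_lt_mul_left hs1 (Nat.zero_le _)
    have hs3 : ∑ a ∈ A, (nb (ind E W) (f a)).card =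
        ∑ y ∈ W, (A.filter (fun a => y ∈ nb (ind E W) (f a))).card := by
      simp only [Finset.card_filter]
      rw [Finset.sum_comm]
      apply Finset.sum_congr rfl
      intro a _
      rw [← Finset.card_filter]
      congr 1
      ext y
      simp only [nb, ind, Finset.mem_filter, Finset.mem_univ, true_and]
      constructor
      · intro h; exact ⟨h.2.2 (by simp), h⟩
      · exact fun h => h.2
    have hs4 : ∑ y ∈ W, (A.filter (fun a => y ∈ nb (ind E W) (f a))).card ≤
        ∑ y ∈ W, ((A.card - 1) + if y ∈ (Finset.univ \ A).image f then 1 else 0) := by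
      apply Finset.sum_le_sum
      intro y _
      have hAp : 0 < A.card := hA.card_pos
      split_ifs with hy
      · have := Finset.card_filter_le A (fun a => y ∈ nb (ind E W) (f a))
        omega
      · suffices h : ∃ a ∈ A, y ∉ nb (ind E W) (f a) by
          obtain ⟨a, ha, hya⟩ := h
          have : (A.filter (fun a => y ∈ nb (ind E W) (f a))).card < A.card := by
            apply Finset.card_lt_card
            rw [Finset.ssubset_iff_of_subset (Finset.filter_subset _ _)]
            exact ⟨a, ha, by simp [hya]⟩
          omega
        by_cases hr : ∃ a, f a = y
        · obtain ⟨a, rfl⟩ := hr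
          refine ⟨a, ?_, by simp [nb]⟩
          by_contra haA
          exact hy (Finset.mem_image_of_mem f (by simp [haA]))
        · push Not at hr
          obtain ⟨a, ha, hh⟩ := hno y hr
          refine ⟨a, ha, ?_⟩
          simp only [nb, ind, Finset.mem_filter, Finset.mem_univ, true_and]
          tauto
    have hs5 : ∑ y ∈ W, ((A.card - 1) + if y ∈ (Finset.univ \ A).image f then 1 else 0) ≤
        (A.card - 1) * W.card + (Fintype.card α - A.card) := by
      rw [Finset.sum_add_distrib, Finset.sum_const, smul_eq_mul, mul_comm, ← Finset.card_filter]
      apply Nat.add_le_add_left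
      refine (Finset.card_le_card (t := (Finset.univ \ A).image f) ?_).trans
        (Finset.card_image_le.trans ?_)
      · intro y hy; exact (Finset.mem_filter.mp hy).2
      · rw [Finset.card_univ_sdiff]
    omega
  obtain ⟨y, hy1, hy2⟩ := key
  refine ⟨fun o => o.elim y f, ?_, ?_⟩
  · intro a b hab
    rcases a with _ | a <;> rcases b with _ | b
    · rfl
    · exact absurd hab.symm (hy1 b)
    · exact absurd hab (hy1 a)
    · exact congrArg some (hf hab)
  · intro e he
    simp only [Fplus, dClosure, Finset.mem_biUnion, Finset.mem_union, Finset.mem_image,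
      Finset.mem_powerset] at he
    obtain ⟨s, hs, hes⟩ := he
    refine hE (s.image (fun o => o.elim y f)) ?_ _ (Finset.image_subset_image hes)
    rcases hs with ⟨t, ht, rfl⟩ | ⟨a, ha, rfl⟩
    · rw [Finset.image_image]
      exact hFE t ht
    · rw [Finset.image_insert, Finset.image_singleton, Finset.pair_comm]
      exact hy2 a ha

lemma copy_of_many {α V : Type*} [LinearOrder V] [Fintype V]
    (F : Finset (Finset α)) (E : Finset (Finset V)) (W : Finset V)
    (hc : exUnif 3 W.card F < ((ind E W).filter (fun e => e.card = 3)).card) :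
    ∃ f : α → V, Function.Injective f ∧ (∀ a, f a ∈ W) ∧ ∀ e ∈ F, e.image f ∈ E := by
  classical
  let g := W.orderEmbOfFin rfl
  let T : Finset (Finset (Fin W.card)) :=
    Finset.univ.filter (fun e => e.card = 3 ∧ e.image g ∈ E)
  have hT : ((ind E W).filter (fun e => e.card = 3)).card ≤ T.card := by
    refine (Finset.card_le_card ?_).trans (Finset.card_image_le (f := fun e => e.image g))
    intro e he
    simp only [ind, Finset.mem_filter] at he
    have hpre : (Finset.univ.filter (fun i => g i ∈ e)).image g = e := by
      ext x
      simp only [Finset.mem_image, Finset.mem_filter, Finset.mem_univ, true_and]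
      constructor
      · rintro ⟨i, hi, rfl⟩; exact hi
      · intro hx
        have : x ∈ Set.range g := by
          rw [Finset.range_orderEmbOfFin]; exact he.1.2 hx
        obtain ⟨i, rfl⟩ := this
        exact ⟨i, hx, rfl⟩
    refine Finset.mem_image.mpr ⟨Finset.univ.filter (fun i => g i ∈ e), ?_, hpre⟩
    simp only [T, Finset.mem_filter, Finset.mem_univ, true_and]
    rw [hpre]
    refine ⟨?_, he.1.1⟩
    rw [← he.2]
    conv_rhs => rw [← hpre]
    rw [Finset.card_image_of_injective _ g.injective]
  have hcopy : HasCopy F T := by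
    by_contra hno
    have := le_exUnif W.card F T (fun e he => (Finset.mem_filter.mp he).2.1) hno
    omega
  obtain ⟨f, hf, hF⟩ := hcopy
  refine ⟨fun a => g (f a), g.injective.comp hf, fun a => Finset.orderEmbOfFin_mem _ _ _, ?_⟩
  intro e he
  have := (Finset.mem_filter.mp (hF e he)).2.2
  rw [Finset.image_image] at this
  exact this

lemma copy_of_four {α V : Type*} [DecidableEq V]
    (F : Finset (Finset α)) (E : Finset (Finset V)) (hE : IsComplex E) (W : Finset V)
    (h4 : HasCopy F ((Finset.univ : Finset (Fin 4)).powersetCard 3))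
    (e4 : Finset V) (he4 : e4 ∈ ind E W) (hc : e4.card = 4) :
    ∃ f : α → V, Function.Injective f ∧ (∀ a, f a ∈ W) ∧ ∀ e ∈ F, e.image f ∈ E := by
  obtain ⟨f, hf, -⟩ := h4
  simp only [ind, Finset.mem_filter] at he4
  let g := (e4.equivFinOfCardEq hc).symm
  refine ⟨fun a => (g (f a) : V), ?_, fun a => he4.2 (g (f a)).2, ?_⟩
  · intro a b h
    exact hf (g.injective (Subtype.ext h))
  · intro e _
    refine hE e4 he4.1 _ ?_
    intro x hx
    obtain ⟨a, -, rfl⟩ := Finset.mem_image.mp hx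
    exact (g (f a)).2

lemma ind_card_le {V : Type*} [DecidableEq V] [Fintype V] {E : Finset (Finset V)}
    (hE : IsComplex E) (W : Finset V) (h4 : ¬ ∃ e ∈ ind E W, e.card = 4) :
    (ind E W).card ≤ 1 + W.card + W.card.choose 2 +
      ((ind E W).filter (fun e => e.card = 3)).card := by
  have hsub : ind E W ⊆ ((W.powersetCard 0 ∪ W.powersetCard 1) ∪ W.powersetCard 2) ∪
      (ind E W).filter (fun e => e.card = 3) := by
    intro e he
    have heW : e ⊆ W := (Finset.mem_filter.mp he).2
    have hlt : e.card < 4 := by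
      by_contra h
      push Not at h
      obtain ⟨t, hte, htc⟩ := Finset.exists_subset_card_eq h
      exact h4 ⟨t, ind_complex hE W e he t hte, htc⟩
    simp only [Finset.mem_union, Finset.mem_powersetCard, Finset.mem_filter]
    have : e.card = 0 ∨ e.card = 1 ∨ e.card = 2 ∨ e.card = 3 := by omega
    tauto
  refine (Finset.card_le_card hsub).trans ((Finset.card_union_le _ _).trans ?_)
  apply Nat.add_le_add_right
  refine (Finset.card_union_le _ _).trans ?_
  refine Nat.add_le_add ((Finset.card_union_le _ _).trans ?_) (by simp)
  simp

lemma ex_growth_s7 {α : Type*} (F : Finset (Finset α)) (hproper : IsProper F)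
    (δ : ℝ) (hδ : 0 < δ) (hδ1 : δ ≤ 1) :
    ∃ C : ℝ, 0 ≤ C ∧ ∀ n m : ℕ, 1 ≤ n → m ≤ n →
      (exUnif 3 m F : ℝ) ≤ C + (δ + m / n) * exUnif 3 n F := by
  obtain ⟨n1, h1⟩ := hproper δ hδ
  refine ⟨∑ j ∈ Finset.range (n1 + 1), (exUnif 3 j F : ℝ),
    Finset.sum_nonneg (fun _ _ => Nat.cast_nonneg _), ?_⟩
  intro n m hn hmn
  have hC0 : (0 : ℝ) ≤ ∑ j ∈ Finset.range (n1 + 1), (exUnif 3 j F : ℝ) :=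
    Finset.sum_nonneg (fun _ _ => Nat.cast_nonneg _)
  have hX : (0 : ℝ) ≤ exUnif 3 n F := Nat.cast_nonneg _
  rcases Nat.lt_or_ge m (n1 + 1) with hm | hm
  · have := Finset.single_le_sum (f := fun j => (exUnif 3 j F : ℝ))
      (fun _ _ => Nat.cast_nonneg _) (Finset.mem_range.mpr hm)
    have h2 : 0 ≤ (δ + (m : ℝ) / n) * exUnif 3 n F := by positivity
    linarith
  · have key : (exUnif 3 m F : ℝ) ≤ (δ + (1 - δ) * (m / n)) * exUnif 3 n F := by
      clear hX hn
      induction n, hmn using Nat.le_induction with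
      | base =>
        have : (m : ℝ) ≠ 0 := by
          have : m ≠ 0 := by omega
          exact_mod_cast this
        rw [div_self this]; simp
      | succ n hmn ih =>
        have hp := h1 (n + 1) (by omega)
        simp only [Nat.add_sub_cancel] at hp
        have hn0 : (0 : ℝ) < n := by
          have : 0 < n := by omega
          exact_mod_cast this
        have hmn' : (m : ℝ) ≤ n := by exact_mod_cast hmn
        have hm0 : (0 : ℝ) ≤ m := Nat.cast_nonneg _
        push_cast at hp ⊢
        set X := (exUnif 3 n F : ℝ)
        set Y := (exUnif 3 (n + 1) F : ℝ)
        set N : ℝ := (n : ℝ)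
        set M : ℝ := (m : ℝ)
        have hY : 0 ≤ Y := Nat.cast_nonneg _
        have hXY : X ≤ (1 - 1 / ((1 + δ) * (N + 1))) * Y := by
          have h3 : Y / (N + 1) / (1 + δ) ≤ Y - X := by
            rw [div_le_iff₀ (by positivity)]; linarith
          have h4 : Y / (N + 1) / (1 + δ) = 1 / ((1 + δ) * (N + 1)) * Y := by
            field_simp
          rw [h4] at h3
          linarith
        have hg : 0 ≤ δ + (1 - δ) * (M / N) := by
          have : 0 ≤ (1 - δ) * (M / N) := mul_nonneg (by linarith) (by positivity)
          linarith
        refine ih.trans ((mul_le_mul_of_nonneg_left hXY hg).trans ?_)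
        rw [← mul_assoc]
        apply mul_le_mul_of_nonneg_right _ hY
        have h5 : (δ + (1 - δ) * (M / N)) * (1 - 1 / ((1 + δ) * (N + 1))) =
          (δ * N + (1 - δ) * M) * ((1 + δ) * (N + 1) - 1) / (N * ((1 + δ) * (N + 1))) := by
          field_simp
        have h6 : δ + (1 - δ) * (M / (N + 1)) =
          (δ * (N + 1) + (1 - δ) * M) * ((1 + δ) * N) / (N * ((1 + δ) * (N + 1))) := by
          field_simp
        rw [h5, h6]
        apply div_le_div_of_nonneg_right _ (by positivity)
        have h7 : 0 ≤ δ * (1 - δ) * (N - M) :=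
          mul_nonneg (mul_nonneg hδ.le (by linarith)) (by linarith)
        nlinarith [mul_pos hδ hn0, mul_pos hδ (mul_pos hδ hn0)]
    have h3 : (δ + (1 - δ) * ((m : ℝ) / n)) * exUnif 3 n F ≤ (δ + m / n) * exUnif 3 n F := by
      apply mul_le_mul_of_nonneg_right _ hX
      have : 0 ≤ δ * ((m : ℝ) / n) := by positivity
      linarith
    linarith

lemma coeff_bound (η : ℝ) (hη : 0 < η) : ∃ n0 : ℕ, ∀ n : ℕ, n0 ≤ n →
    Real.exp 1 ^ 3 * (n : ℝ) ^ (n - 2) / ((n : ℝ) + 3) ^ n * (n : ℝ) ^ 2 ≤ 1 + η := by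
  have ht := Real.tendsto_one_add_div_pow_exp 3
  have hlt : Real.exp 3 / (1 + η) < Real.exp 3 := by
    rw [div_lt_iff₀ (by positivity)]
    nlinarith [Real.exp_pos 3]
  obtain ⟨n0, h0⟩ := Filter.eventually_atTop.mp (ht.eventually (lt_mem_nhds hlt))
  refine ⟨max n0 2, fun n hn => ?_⟩
  have h1 := h0 n (le_trans (le_max_left _ _) hn)
  have h2 : 2 ≤ n := le_trans (le_max_right _ _) hn
  have hn0 : (0 : ℝ) < n := by exact_mod_cast (by omega : 0 < n)
  have he : Real.exp 1 ^ 3 = Real.exp 3 := by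
    rw [← Real.exp_nat_mul]; norm_num
  rw [he, div_mul_eq_mul_div, mul_assoc, ← pow_add, Nat.sub_add_cancel h2,
    div_le_iff₀ (by positivity)]
  have h3 : (1 + 3 / (n : ℝ)) ^ n * (n : ℝ) ^ n = ((n : ℝ) + 3) ^ n := by
    rw [← mul_pow]; congr 1; field_simp
  rw [← h3, ← mul_assoc]
  apply mul_le_mul_of_nonneg_right _ (by positivity)
  rw [div_lt_iff₀ (by positivity)] at h1
  linarith

lemma loss_bound (n m X s θ c v η : ℝ) (hn : 0 < n) (hm : 0 ≤ m) (hmn : m ≤ n) (hX : 0 ≤ X)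
    (hs : 0 ≤ s) (hθ : 1 / 2 ≤ θ) (hcv : c ≤ v) (hv : 0 ≤ v) (hη : 0 < η) (hη1 : η ≤ 1)
    (hsθ : θ * s * n ^ 2 ≤ (1 + η) * (X + n ^ 2)) (hnv : 1 / 2 + 2 * v ≤ η * n) :
    2 * (n - m) + s * (θ * (n * (n + 1) - m * (m + 1)) / 2 + c * (n - m)) ≤
      2 * n + (X + n ^ 2) * ((1 - (m / n) ^ 2) / 2 + 3 * η) := by
  have h1 : s * (c * (n - m)) ≤ θ * s * (2 * v * n) := by
    have h2 : c * (n - m) ≤ v * n := by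
      calc c * (n - m) ≤ v * (n - m) := mul_le_mul_of_nonneg_right hcv (by linarith)
        _ ≤ v * n := mul_le_mul_of_nonneg_left (by linarith) hv
    have h3 : s * (c * (n - m)) ≤ s * (v * n) := mul_le_mul_of_nonneg_left h2 hs
    have h4 : 0 ≤ (θ - 1 / 2) * (s * (v * n)) := mul_nonneg (by linarith) (by positivity)
    nlinarith
  have hθs : 0 ≤ θ * s := mul_nonneg (by linarith) hs
  have h5 : s * (θ * (n * (n + 1) - m * (m + 1)) / 2 + c * (n - m)) ≤
      θ * s * ((n ^ 2 - m ^ 2) / 2 + η * n ^ 2) := by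
    have h6 : θ * s * ((1 / 2 + 2 * v) * n) ≤ θ * s * (η * n * n) :=
      mul_le_mul_of_nonneg_left (mul_le_mul_of_nonneg_right hnv hn.le) hθs
    have h7 : 0 ≤ θ * s * m := mul_nonneg hθs hm
    nlinarith
  have ht : 0 ≤ (m / n) ^ 2 := by positivity
  have ht1 : (m / n) ^ 2 ≤ 1 := by
    apply pow_le_one₀ (by positivity)
    rw [div_le_one hn]; exact hmn
  have h8 : θ * s * ((n ^ 2 - m ^ 2) / 2 + η * n ^ 2) =
      (θ * s * n ^ 2) * ((1 - (m / n) ^ 2) / 2 + η) := by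
    field_simp
  have h9 : (θ * s * n ^ 2) * ((1 - (m / n) ^ 2) / 2 + η) ≤
      ((1 + η) * (X + n ^ 2)) * ((1 - (m / n) ^ 2) / 2 + η) :=
    mul_le_mul_of_nonneg_right hsθ (by linarith)
  have h10 : (1 + η) * ((1 - (m / n) ^ 2) / 2 + η) ≤ (1 - (m / n) ^ 2) / 2 + 3 * η := by
    nlinarith [mul_nonneg hη.le ht, mul_nonneg hη.le (sub_nonneg.mpr hη1)]
  have h11 := mul_le_mul_of_nonneg_left h10 (by positivity : 0 ≤ X + n ^ 2)
  linarith

lemma final_ineq (n m X Y C L ε η e Q : ℝ) (hn : 0 < n) (hm : 0 ≤ m) (hmn : m ≤ n) (hX : 0 ≤ X)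
    (hη : 8 * η ≤ ε) (hε : 0 < ε)
    (hY : Y ≤ C + (η + m / n) * X)
    (hQ : Q ≤ L * n + (X + n ^ 2) * ((1 - (m / n) ^ 2) / 2 + 3 * η))
    (he : (1 + ε) * (X + n * (n - 1) / 2) - Q ≤ e)
    (hbig : (1 + ε + L + 2) * n + C + 1 < ε / 8 * n ^ 2) :
    1 + m + m * (m - 1) / 2 + Y < e := by
  have hmt : m = (m / n) * n := by field_simp
  set t := m / n with ht
  have ht0 : 0 ≤ t := by positivity
  have h1 : (η + t) * X ≤ (η + (1 + t ^ 2) / 2) * X :=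
    mul_le_mul_of_nonneg_right (by nlinarith [sq_nonneg (1 - t)]) hX
  have h2 : m ^ 2 = t ^ 2 * n ^ 2 := by rw [hmt]; ring
  have h3 : 0 ≤ (ε - 4 * η) * X := mul_nonneg (by linarith) hX
  have h4 : 0 ≤ (ε / 8 * 3 - 3 * η) * n ^ 2 := mul_nonneg (by linarith) (by positivity)
  have h5 : 0 ≤ ε * n := by positivity
  nlinarith

end helpers

set_option maxHeartbeats 1000000 in
theorem statement7 {α : Type*} [DecidableEq α] [Fintype α] (F : Finset (Finset α))
    (hunif : ∀ e ∈ F, e.card = 3) (hproper : IsProper F)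
    (A : Finset α) (hA : A.Nonempty) (ε : ℝ) (hε : 0 < ε) :
    ∃ n0 : ℕ, ∀ n : ℕ, n0 ≤ n → ∀ E : Finset (Finset (Fin n)),
      IsComplex E →
      Real.exp 1 ^ 3 * (n : ℝ) ^ (n - 2) / ((n : ℝ) + 3) ^ n *
          ((exUnif 3 n F : ℝ) + (n : ℝ) ^ 2) ≥
        (((A.card : ℝ) - 1) / (A.card : ℝ) +
            (1 / (n : ℝ)) * (((Fintype.card α : ℝ) - (A.card : ℝ)) / (A.card : ℝ))) *
          (1 + ∑ i ∈ Finset.Icc 2 n, (maxPairDeg E (i + 1) : ℝ) / (i : ℝ)) →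
      (E.card : ℝ) ≥ (1 + ε) * ((exUnif 3 n F : ℝ) + (n.choose 2 : ℝ)) →
      ((¬ ∃ e ∈ E, e.card = 4) ∨
        HasCopy F ((Finset.univ : Finset (Fin 4)).powersetCard 3)) →
      HasCopy (Fplus F A) E := by

  set v : ℕ := Fintype.card α with hv
  have hAv : A.card ≤ v := Finset.card_le_univ A
  have hA1 : 1 ≤ A.card := hA.card_pos
  set η : ℝ := min ε 1 / 8 with hηdef
  have hη0 : 0 < η := by
    have : 0 < min ε 1 := lt_min hε one_pos
    positivity
  have hηε : 8 * η ≤ ε := by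
    have := min_le_left ε 1
    rw [hηdef]; linarith
  have hη1 : η ≤ 1 := by
    have := min_le_right ε 1
    rw [hηdef]; linarith
  obtain ⟨C, hC0, hC⟩ := ex_growth_s7 F hproper η hη0 hη1
  obtain ⟨n1, hn1⟩ := coeff_bound η hη0
  set L : ℝ := 2 ^ v + 2 with hL
  have hL0 : 0 ≤ L := by positivity
  obtain ⟨n2, hn2⟩ := exists_nat_gt ((1 / 2 + 2 * (v : ℝ)) / η)
  obtain ⟨n3, hn3⟩ := exists_nat_gt ((1 + ε + L + 2 + C + 1) / (ε / 8))
  refine ⟨max (max n1 n2) (max n3 1), ?_⟩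
  intro n hn E hE hcond hcard halt
  have hnn1 : n1 ≤ n := by omega
  have hnn2 : (n2 : ℝ) ≤ n := by exact_mod_cast (by omega : n2 ≤ n)
  have hnn3 : (n3 : ℝ) ≤ n := by exact_mod_cast (by omega : n3 ≤ n)
  have hn1' : 1 ≤ n := by omega
  have hnR1 : (1 : ℝ) ≤ n := by exact_mod_cast hn1'
  have hnR : (0 : ℝ) < n := by linarith
  have hbig1 : 1 / 2 + 2 * (v : ℝ) ≤ η * n := by
    rw [div_lt_iff₀ hη0] at hn2
    nlinarith
  have hbig2 : (1 + ε + L + 2) * (n : ℝ) + C + 1 < ε / 8 * (n : ℝ) ^ 2 := by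
    rw [div_lt_iff₀ (by positivity)] at hn3
    have h1 : 1 + ε + L + 2 + C + 1 < n * (ε / 8) :=
      hn3.trans_le (mul_le_mul_of_nonneg_right hnn3 (by positivity))
    have h2 := mul_lt_mul_of_pos_right h1 hnR
    nlinarith
  set S : ℝ := ∑ i ∈ Finset.Icc 2 n, (maxPairDeg E (i + 1) : ℝ) / (i : ℝ) with hS
  have hS0 : 0 ≤ S := Finset.sum_nonneg (fun i _ => by positivity)
  set X : ℝ := (exUnif 3 n F : ℝ) with hXdef
  have hX0 : 0 ≤ X := Nat.cast_nonneg _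
  have hAR : (1 : ℝ) ≤ A.card := by exact_mod_cast hA1
  have hAvR : (A.card : ℝ) ≤ v := by exact_mod_cast hAv
  -- the potential function
  obtain ⟨P, hP1, hP2⟩ : ∃ P : ℕ → ℝ,
      (∀ W : Finset (Fin n), ∀ x ∈ W,
        A.card * (nb (ind E W) x).card ≤ (A.card - 1) * W.card + (v - A.card) →
        (((ind E W).filter (fun e => x ∈ e)).card : ℝ) < P W.card - P (W.card - 1)) ∧
      (∀ m : ℕ, m ≤ n → P n - P m ≤
        L * n + (X + (n : ℝ) ^ 2) * ((1 - ((m : ℝ) / n) ^ 2) / 2 + 3 * η)) := by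
    rcases Nat.lt_or_ge A.card 2 with hA2 | hA2
    · have hAeq : A.card = 1 := by omega
      refine ⟨fun j => (2 ^ v + 1) * (j : ℝ), ?_, ?_⟩
      · intro W x hx hb
        have hW : 1 ≤ W.card := Finset.card_pos.mpr ⟨x, hx⟩
        rw [hAeq] at hb
        have h1 := deg_le_pow (ind_complex hE W) x
        have h2 : 2 ^ (nb (ind E W) x).card ≤ 2 ^ v :=
          Nat.pow_le_pow_right (by norm_num) (by omega)
        have h3 : (((ind E W).filter (fun e => x ∈ e)).card : ℝ) ≤ 2 ^ v := by
          exact_mod_cast h1.trans h2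
        simp only
        rw [Nat.cast_sub hW]
        push_cast
        linarith
      · intro m hm
        have hmR : (m : ℝ) ≤ n := by exact_mod_cast hm
        have hm0 : (0 : ℝ) ≤ m := Nat.cast_nonneg _
        have ht1 : ((m : ℝ) / n) ^ 2 ≤ 1 := by
          apply pow_le_one₀ (by positivity)
          rw [div_le_one hnR]; exact hmR
        have h1 : 0 ≤ (X + (n : ℝ) ^ 2) * ((1 - ((m : ℝ) / n) ^ 2) / 2 + 3 * η) :=
          mul_nonneg (by positivity) (by linarith)
        have h2 : 0 ≤ ((2 : ℝ) ^ v + 1) * m := by positivity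
        simp only [hL]
        linarith
    · set θ : ℝ := ((A.card : ℝ) - 1) / A.card with hθ
      set c : ℝ := ((v : ℝ) - A.card) / A.card with hc
      have hA2R : (2 : ℝ) ≤ A.card := by exact_mod_cast hA2
      have hA0 : (0 : ℝ) < A.card := by linarith
      have hθ2 : 1 / 2 ≤ θ := by
        rw [hθ, le_div_iff₀ hA0]; linarith
      have hc0 : 0 ≤ c := div_nonneg (by linarith) hA0.le
      have hcv : c ≤ v := by
        rw [hc, div_le_iff₀ hA0]
        nlinarith
      refine ⟨fun j => 2 * (j : ℝ) + (1 + S) * (θ * ((j : ℝ) * (j + 1)) / 2 + c * j), ?_, ?_⟩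
      · intro W x hx hb
        have hW : 1 ≤ W.card := Finset.card_pos.mpr ⟨x, hx⟩
        have h1 := deg_le (E := E) (G := ind E W) (Finset.filter_subset _ _) (ind_complex hE W) x
        have hbR : (A.card : ℝ) * (nb (ind E W) x).card ≤
            ((A.card : ℝ) - 1) * W.card + ((v : ℝ) - A.card) := by
          have : ((A.card * (nb (ind E W) x).card : ℕ) : ℝ) ≤
            (((A.card - 1) * W.card + (v - A.card) : ℕ) : ℝ) := by exact_mod_cast hb
          push_cast [Nat.cast_sub hA1, Nat.cast_sub hAv] at this
          exact this
        have h2 : ((nb (ind E W) x).card : ℝ) ≤ θ * W.card + c := by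
          have : θ * W.card + c = (((A.card : ℝ) - 1) * W.card + ((v : ℝ) - A.card)) / A.card := by
            rw [hθ, hc]; field_simp
          rw [this, le_div_iff₀ hA0]
          linarith
        have h3 := mul_le_mul_of_nonneg_right h2 (by linarith : 0 ≤ 1 + S)
        simp only
        rw [Nat.cast_sub hW]
        push_cast
        rw [← hS] at h1
        generalize (W.card : ℝ) = w at h3 ⊢
        have h4 : 2 * w + (1 + S) * (θ * (w * (w + 1)) / 2 + c * w) -
            (2 * (w - 1) + (1 + S) * (θ * ((w - 1) * (w - 1 + 1)) / 2 + c * (w - 1))) =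
            2 + (θ * w + c) * (1 + S) := by ring
        rw [h4]
        linarith
      · intro m hm
        have hmR : (m : ℝ) ≤ n := by exact_mod_cast hm
        have hm0 : (0 : ℝ) ≤ m := Nat.cast_nonneg _
        have hsθ : θ * (1 + S) * (n : ℝ) ^ 2 ≤ (1 + η) * (X + (n : ℝ) ^ 2) := by
          have h1 : θ * (1 + S) ≤ (θ + 1 / (n : ℝ) * c) * (1 + S) := by
            apply mul_le_mul_of_nonneg_right _ (by linarith)
            have : 0 ≤ 1 / (n : ℝ) * c := by positivity
            linarith
          have h2 := mul_le_mul_of_nonneg_right (h1.trans hcond) (sq_nonneg (n : ℝ))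
          have h3 := mul_le_mul_of_nonneg_right (hn1 n hnn1)
            (by positivity : 0 ≤ X + (n : ℝ) ^ 2)
          linarith
        have h4 := loss_bound n m X (1 + S) θ c v η hnR hm0 hmR hX0 (by linarith) hθ2 hcv
          (Nat.cast_nonneg _) hη0 hη1 hsθ hbig1
        have h5 : 2 * (n : ℝ) ≤ L * n := by
          apply mul_le_mul_of_nonneg_right _ hnR.le
          have : (0 : ℝ) ≤ 2 ^ v := by positivity
          rw [hL]; linarith
        simp only
        linarith
  obtain ⟨W, hgood, hWcard⟩ := exists_good E P
    (fun W x => A.card * (nb (ind E W) x).card ≤ (A.card - 1) * W.card + (v - A.card)) hP1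
  rw [Fintype.card_fin] at hWcard
  have hWn : W.card ≤ n := by simpa using Finset.card_le_univ W
  have hcopy : ∃ f : α → Fin n, Function.Injective f ∧ (∀ a, f a ∈ W) ∧
      ∀ e ∈ F, e.image f ∈ E := by
    by_cases h4 : ∃ e ∈ ind E W, e.card = 4
    · obtain ⟨e4, he4, hc4⟩ := h4
      rcases halt with h | h
      · exact absurd ⟨e4, (Finset.mem_filter.mp he4).1, hc4⟩ h
      · exact copy_of_four F E hE W h e4 he4 hc4
    · apply copy_of_many
      have h5 := ind_card_le hE W h4
      have h5R : ((ind E W).card : ℝ) ≤ 1 + W.card + (W.card : ℝ) * ((W.card : ℝ) - 1) / 2 +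
          ((ind E W).filter (fun e => e.card = 3)).card := by
        rw [← Nat.cast_choose_two]
        exact_mod_cast h5
      have h6 := final_ineq n W.card X (exUnif 3 W.card F) C L ε η (ind E W).card
        (P n - P W.card) hnR (Nat.cast_nonneg _) (by exact_mod_cast hWn) hX0 hηε hε
        (hC n W.card hn1' hWn) (hP2 W.card hWn)
        (by rw [← Nat.cast_choose_two]; linarith) hbig2
      have h7 : (exUnif 3 W.card F : ℝ) <
          ((ind E W).filter (fun e => e.card = 3)).card := by linarith
      exact_mod_cast h7
  obtain ⟨f, hf, hfW, hFE⟩ := hcopy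
  exact extend_copy F A hA E hE W f hf hfW hFE (fun x hx => not_le.mp (hgood x hx))
end
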